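/- Let R be a henselian Noetherian local ring whose 𝔪-adic completion is isomorphic to Q/(f₁, …, f_c) for some regular local ring Q and some Q-regular sequence f₁, …, f_c (i.e. R is a henselian local complete intersection). Let 𝒳 be a resolving subcategory of the category of finitely generated R-modules all of whose members are maximal Cohen–Macaulay, and let M be a finitely generated R-module. If M admits a right 𝒳-approximation (equivalently, the functor Hom_R(−, M)|_𝒳 is finitely generated), then M ∈ 𝒞(𝒳) (equivalently, Hom_R(−, M)|_𝒳 is finitely presented); in other words, 𝒳 is coherent. -/

import Mathlib

open CategoryTheory IsLocalRing

universe u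

noncomputable section

/-- The `i`-th Ext module of two `R`-modules. -/
abbrev ExtMod (R : Type u) [CommRing R] (i : ℕ) (M N : ModuleCat.{u} R) : ModuleCat R :=
  ((Ext R (ModuleCat.{u} R) i).obj (Opposite.op M)).obj N

/-- Vanishing of the `i`-th Ext module: `Ext_R^i(M, N) = 0`. -/
def ExtVanish (R : Type u) [CommRing R] (i : ℕ) (M N : ModuleCat.{u} R) : Prop :=
  Subsingleton (ExtMod R i M N)

variable (R : Type u) [CommRing R]

/-- `0 → A → B → C → 0` is a short exact sequence. -/
def IsSES {A B C : ModuleCat.{u} R} (f : A →ₗ[R] B) (g : B →ₗ[R] C) : Prop :=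
  Function.Injective f ∧ Function.Exact f g ∧ Function.Surjective g

/-- A resolving subcategory of the category of finitely generated `R`-modules. -/
structure IsResolving (𝒳 : Set (ModuleCat.{u} R)) : Prop where
  finite : ∀ M ∈ 𝒳, Module.Finite R M
  isoClosed : ∀ {M N : ModuleCat.{u} R}, M ∈ 𝒳 → (↥M ≃ₗ[R] ↥N) → N ∈ 𝒳
  freeMem : ∀ M : ModuleCat.{u} R, Module.Finite R M → Module.Free R M → M ∈ 𝒳
  summandClosed : ∀ M N : ModuleCat.{u} R, ModuleCat.of R (↥M × ↥N) ∈ 𝒳 → M ∈ 𝒳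
  extClosed : ∀ (A B C : ModuleCat.{u} R) (f : A →ₗ[R] B) (g : B →ₗ[R] C),
    IsSES R f g → A ∈ 𝒳 → C ∈ 𝒳 → B ∈ 𝒳
  kerClosed : ∀ (A B C : ModuleCat.{u} R) (f : A →ₗ[R] B) (g : B →ₗ[R] C),
    IsSES R f g → B ∈ 𝒳 → C ∈ 𝒳 → A ∈ 𝒳

/-- `f : X → M` is a right `𝒳`-approximation of `M`. -/
def IsRightApprox (𝒳 : Set (ModuleCat.{u} R)) {X M : ModuleCat.{u} R} (f : X →ₗ[R] M) : Prop :=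
  X ∈ 𝒳 ∧ ∀ W ∈ 𝒳, ∀ g : ↥W →ₗ[R] ↥M, ∃ h : ↥W →ₗ[R] ↥X, f ∘ₗ h = g

/-- `M` admits a right `𝒳`-approximation. -/
def HasRightApprox (𝒳 : Set (ModuleCat.{u} R)) (M : ModuleCat.{u} R) : Prop :=
  ∃ (X : ModuleCat.{u} R) (f : X →ₗ[R] M), IsRightApprox R 𝒳 f

/-- `𝒳` is contravariantly infinite: no finitely generated module outside `𝒳` admits
a right `𝒳`-approximation. -/
def ContravariantlyInfinite (𝒳 : Set (ModuleCat.{u} R)) : Prop :=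
  ∀ M : ModuleCat.{u} R, Module.Finite R M → M ∉ 𝒳 → ¬ HasRightApprox R 𝒳 M

/-- `𝒳` is contravariantly finite: every finitely generated module admits
a right `𝒳`-approximation. -/
def ContravariantlyFinite (𝒳 : Set (ModuleCat.{u} R)) : Prop :=
  ∀ M : ModuleCat.{u} R, Module.Finite R M → HasRightApprox R 𝒳 M

/-- The restricted functor `Hom_R(-, C)|_𝒳` is finitely presented, i.e. `C ∈ 𝒞(𝒳)`. -/
def MemCC (𝒳 : Set (ModuleCat.{u} R)) (C : ModuleCat.{u} R) : Prop :=
  ∃ (X₀ X₁ : ModuleCat.{u} R) (g : ↥X₁ →ₗ[R] ↥X₀) (f : ↥X₀ →ₗ[R] ↥C), X₀ ∈ 𝒳 ∧ X₁ ∈ 𝒳 ∧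
    ∀ W ∈ 𝒳, Function.Surjective (fun h : ↥W →ₗ[R] ↥X₀ => f ∘ₗ h) ∧
      Function.Exact (fun h : ↥W →ₗ[R] ↥X₁ => g ∘ₗ h) (fun h : ↥W →ₗ[R] ↥X₀ => f ∘ₗ h)

/-- `𝒳` is coherent: `𝒞(𝒳) = rap 𝒳`. -/
def Coherent (𝒳 : Set (ModuleCat.{u} R)) : Prop :=
  ∀ M : ModuleCat.{u} R, Module.Finite R M → (MemCC R 𝒳 M ↔ HasRightApprox R 𝒳 M)

/-- The right Ext-orthogonal class `𝒳^⊥` of a class `𝒳` of finitely generated modules. -/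
def XPerp (𝒳 : Set (ModuleCat.{u} R)) : Set (ModuleCat.{u} R) :=
  {Y | Module.Finite R Y ∧ ∀ X ∈ 𝒳, ∀ i, 0 < i → ExtVanish R i X Y}

/-- The projective dimension of `M` is at most `n`. -/
def ProjDimLE (M : ModuleCat.{u} R) (n : ℕ) : Prop :=
  ∀ N : ModuleCat.{u} R, ∀ i, n < i → ExtVanish R i M N

/-- The depth of an `R`-module over a local ring: `inf { i | Ext^i(k, M) ≠ 0 }`. -/
def moduleDepth [IsLocalRing R] (M : ModuleCat.{u} R) : ℕ∞ :=
  sInf ((fun i : ℕ => (i : ℕ∞)) ''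
    {i : ℕ | ¬ ExtVanish R i (ModuleCat.of R (ResidueField R)) M})

/-- `M` is a maximal Cohen–Macaulay `R`-module: `depth M ≥ dim R`. -/
def IsMCM [IsLocalRing R] (M : ModuleCat.{u} R) : Prop :=
  ringKrullDim R ≤ (moduleDepth R M : WithBot ℕ∞)

/-- A Gorenstein local ring: `∃ n, Ext^i(M, R) = 0` for every finitely generated `M`
and every `i > n`. -/
def IsGorensteinLocalRing : Prop :=
  ∃ n : ℕ, ∀ M : ModuleCat.{u} R, Module.Finite R M →
    ∀ i, n < i → ExtVanish R i M (ModuleCat.of R R)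

/-- A regular local ring: Noetherian local with `dim R = dim_k 𝔪/𝔪²`. -/
def IsRegularLocal [IsLocalRing R] : Prop :=
  IsNoetherianRing R ∧
    ringKrullDim R = (Module.finrank (ResidueField R) (CotangentSpace R) : ℕ)

/-- Witness that the local ring `R` is a complete intersection: its `𝔪`-adic completion
is `Q/(f₁, …, f_c)` for a regular local ring `Q` and a `Q`-regular sequence `f₁, …, f_c`. -/
structure CompleteIntersectionWitness [IsLocalRing R] : Type (u + 1) where
  Q : Type u
  [commRing : CommRing Q]
  [localRing : IsLocalRing Q]
  regular : IsRegularLocal Q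
  fs : List Q
  regSeq : RingTheory.Sequence.IsRegular Q fs
  equiv : AdicCompletion (maximalIdeal R) R ≃+* Q ⧸ Ideal.span {x : Q | x ∈ fs}

/-- The local ring `R` is a complete intersection. -/
def IsCompleteIntersection [IsLocalRing R] : Prop :=
  Nonempty (CompleteIntersectionWitness R)

end

/-
Let `f : X → M` be a right `𝒳`-approximation. As `R` is henselian, Fitting decompositions of
endomorphisms allow `f` to be taken right minimal, and Wakamatsu's lemma then puts `𝒳` inside the
left Ext-orthogonal class of `K := ker f`. Hence, writing `S` for the completion of `R`, every
`S ⊗ W` with `W ∈ 𝒳` lies in the left orthogonal class `𝒴` of `S ⊗ K`, which is resolving.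

Write `S = Q/(f₁, …, f_c)`. Since `W` is maximal Cohen–Macaulay, the Auslander–Buchsbaum formula
gives `pd_Q (S ⊗ W) ≤ c`. Dividing out one `fᵢ` at a time, and lifting `𝒴` along each step,
one finds that `S ⊗ W` embeds in a finite free module with cokernel in `𝒴`: the base case is that
of projective dimension zero. Maps `S ⊗ W → S ⊗ K` therefore extend to that free module, and so
factor through `S ⊗ P → S ⊗ K` for every surjection `P → K`. By faithfully flat descent, maps
`W → K` factor through `P → K`; with `P` finite free, `P → X → M` presents `Hom(-, M)|_𝒳`.
-/

section Henselian

open Polynomial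

variable {R : Type*} [CommRing R] [HenselianLocalRing R]

theorem exists_hasMap_residue_eq (P : StandardEtalePair R) {α : ResidueField R}
    (hα : P.HasMap α) : ∃ a : R, P.HasMap a ∧ residue R a = α := by
  have hlift := (HenselianLocalRing.TFAE R).out 0 1
  obtain ⟨a, ha, rfl⟩ := hlift.1 inferInstance P.f P.monic_f α hα.1
    hα.isUnit_derivative_f.ne_zero
  have haeval : aeval (residue R a) P.g = residue R (aeval a P.g) := by
    rw [← ResidueField.algebraMap_eq, aeval_algebraMap_apply]
  refine ⟨a, ⟨by simpa [aeval_def] using ha, ?_⟩, rfl⟩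
  exact (isUnit_map_iff (residue R) _).1 (haeval ▸ hα.2)

theorem exists_algHom_lift_of_isStandardEtale {A : Type*} [CommRing A] [Algebra R A]
    [Algebra.IsStandardEtale R A] (ψ : A →ₐ[R] ResidueField R) :
    ∃ σ : A →ₐ[R] R, (Algebra.ofId R (ResidueField R)).comp σ = ψ := by
  obtain ⟨P⟩ := Algebra.IsStandardEtale.nonempty_standardEtalePresentation (R := R) (S := A)
  obtain ⟨a, ha, hres⟩ := exists_hasMap_residue_eq P.P (P.hasMap.map ψ)
  refine ⟨(P.P.lift a ha).comp P.equivRing.toAlgHom, ?_⟩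
  have hcomp : ((Algebra.ofId R (ResidueField R)).comp
      ((P.P.lift a ha).comp P.equivRing.toAlgHom)).comp P.equivRing.symm.toAlgHom =
      ψ.comp P.equivRing.symm.toAlgHom :=
    StandardEtalePair.hom_ext (by simp [Algebra.ofId_apply, hres])
  ext x
  simpa using congr($hcomp (P.equivRing x))

theorem exists_algHom_lift_of_etale {A : Type*} [CommRing A] [Algebra R A] [Algebra.Etale R A]
    (ψ : A →ₐ[R] ResidueField R) :
    ∃ σ : A →ₐ[R] R, (Algebra.ofId R (ResidueField R)).comp σ = ψ := by
  have : (RingHom.ker ψ.toRingHom).IsPrime := RingHom.ker_isPrime _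
  obtain ⟨h, hh, _⟩ := Algebra.IsEtaleAt.exists_isStandardEtale (R := R) (RingHom.ker ψ.toRingHom)
  have hunit : IsUnit (ψ h) := isUnit_iff_ne_zero.2 hh
  let ψ' : Localization.Away h →ₐ[R] ResidueField R :=
    IsLocalization.liftAlgHom (M := Submonoid.powers h) (f := ψ) (by
      rintro ⟨_, n, rfl⟩
      simpa using hunit.pow n)
  obtain ⟨σ, hσ⟩ := exists_algHom_lift_of_isStandardEtale ψ'
  refine ⟨σ.comp (IsScalarTower.toAlgHom R A (Localization.Away h)), ?_⟩
  rw [← AlgHom.comp_assoc, hσ]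
  ext x
  simp [ψ']

theorem exists_factorization_lift_of_isCoprime {P : R[X]} (hP : P.Monic)
    {a b : (ResidueField R)[X]} (ha : a.Monic) (hb : b.Monic) (hab : IsCoprime a b)
    (hPab : P.map (residue R) = a * b) :
    ∃ A B : R[X], P = A * B ∧ IsCoprime A B ∧ A.map (residue R) = a ∧ B.map (residue R) = b := by
  have hdeg : P.natDegree = a.natDegree + b.natDegree := by
    rw [← ha.natDegree_mul hb, ← hPab, hP.natDegree_map]
  let e (S : Type _) [CommRing S] [Algebra R S] :=
    UniversalCoprimeFactorizationRing.homEquiv S a.natDegree b.natDegree hdeg (.mk P hP rfl)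
  obtain ⟨σ, hσ⟩ := exists_algHom_lift_of_etale
    ((e (ResidueField R)).symm ⟨(.mk a ha rfl, .mk b hb rfl), hPab.symm, hab⟩)
  have hfst := UniversalCoprimeFactorizationRing.homEquiv_comp_fst R a.natDegree b.natDegree hdeg
    (.mk P hP rfl) σ (Algebra.ofId R (ResidueField R))
  have hsnd := UniversalCoprimeFactorizationRing.homEquiv_comp_snd R a.natDegree b.natDegree hdeg
    (.mk P hP rfl) σ (Algebra.ofId R (ResidueField R))
  simp only [hσ, e, Equiv.apply_symm_apply] at hfst hsnd
  obtain ⟨hmul, hcop⟩ := (e R σ).2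
  exact ⟨(e R σ).1.1.1, (e R σ).1.2.1, by simpa using hmul.symm, hcop,
    (congrArg Subtype.val hfst).symm, (congrArg Subtype.val hsnd).symm⟩

theorem exists_isCoprime_mul_eq_isUnit_eval {P : R[X]} (hP : P.Monic) :
    ∃ A B : R[X], P = A * B ∧ IsCoprime A B ∧ IsUnit (A.eval 1) ∧ IsUnit (B.eval 0) := by
  obtain ⟨b, hb, hXb⟩ := exists_eq_pow_rootMultiplicity_mul_and_not_dvd (P.map (residue R))
    (hP.map _).ne_zero 0
  rw [C_0, sub_zero] at hb hXb
  obtain ⟨A, B, hPAB, hAB, hA, rfl⟩ := exists_factorization_lift_of_isCoprime hP (monic_X_pow _)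
    ((monic_X_pow _).of_mul_monic_left (hb ▸ hP.map _))
    ((irreducible_X.coprime_iff_not_dvd.2 hXb).pow_left) hb
  refine ⟨A, B, hPAB, hAB, (isUnit_map_iff (residue R) _).1 ?_,
    (isUnit_map_iff (residue R) _).1 ?_⟩
  · rw [← eval₂_at_apply, ← Polynomial.eval_map, hA]
    simp
  · rw [← eval₂_at_apply, ← Polynomial.eval_map, isUnit_iff_ne_zero, map_zero,
      ← coeff_zero_eq_eval_zero]
    rwa [X_dvd_iff] at hXb

end Henselian

section MinimalApproximations

open Polynomial TensorProduct

/-- Right minimality of `f` in the sense of Auslander and Smalø: an endomorphism of the source over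
the target is an automorphism. -/
def IsRightMinimal {R X M : Type*} [CommRing R] [AddCommGroup X] [Module R X] [AddCommGroup M]
    [Module R M] (f : X →ₗ[R] M) : Prop :=
  ∀ φ : X →ₗ[R] X, f ∘ₗ φ = f → Function.Bijective φ

theorem apply_aeval_eq_eval_one_smul {R X M : Type*} [CommRing R] [AddCommGroup X] [Module R X]
    [AddCommGroup M] [Module R M] {f : X →ₗ[R] M} {φ : Module.End R X} (hφ : f ∘ₗ φ = f)
    (p : R[X]) (x : X) : f (aeval φ p x) = p.eval 1 • f x := by
  have hpow (n : ℕ) : f ∘ₗ (φ ^ n) = f := by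
    induction n with
    | zero => rfl
    | succ n ih => rw [pow_succ, Module.End.mul_eq_comp, ← LinearMap.comp_assoc, ih, hφ]
  induction p using Polynomial.induction_on' with
  | add p q hp hq => simp [hp, hq, add_smul]
  | monomial n a =>
    simpa [aeval_monomial, Module.algebraMap_end_apply] using congr(a • $(hpow n) x)

theorem bijective_of_aeval_eq_zero_of_isUnit_eval_zero {R X : Type*} [CommRing R] [AddCommGroup X]
    [Module R X] {φ : Module.End R X} {p : R[X]} (hp : aeval φ p = 0) (hp0 : IsUnit (p.eval 0)) :
    Function.Bijective φ := by
  have hmul : aeval φ p.divX * φ = -algebraMap R _ (p.eval 0) := by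
    have hdiv := congrArg (aeval φ) (divX_mul_X_add p)
    rwa [hp, map_add, map_mul, aeval_X, aeval_C, coeff_zero_eq_eval_zero,
      add_eq_zero_iff_eq_neg] at hdiv
  have hcomm : Commute (aeval φ p.divX) φ := by
    simpa using (Commute.all p.divX Polynomial.X).map (aeval φ)
  have hunit : IsUnit (aeval φ p.divX * φ) := hmul ▸ (hp0.map (algebraMap R _)).neg
  exact (Module.End.isUnit_iff φ).1 (hcomm.isUnit_mul_iff.1 hunit).2

theorem exists_isCompl_le_ker_of_comp_eq {R X M : Type*} [CommRing R] [HenselianLocalRing R]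
    [AddCommGroup X] [Module R X] [Module.Finite R X] [AddCommGroup M] [Module R M]
    {f : X →ₗ[R] M} {φ : X →ₗ[R] X} (hφ : f ∘ₗ φ = f) :
    ∃ Y Z : Submodule R X, IsCompl Y Z ∧ Y ≤ LinearMap.ker f ∧
      (Y = ⊥ → Function.Bijective φ) := by
  obtain ⟨P, hP, hPφ⟩ := LinearMap.exists_monic_and_aeval_eq_zero R φ
  obtain ⟨A, B, rfl, hAB, hA, hB⟩ := exists_isCoprime_mul_eq_isUnit_eval hP
  refine ⟨LinearMap.ker (aeval φ A), LinearMap.ker (aeval φ B),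
    ⟨disjoint_ker_aeval_of_isCoprime φ hAB, codisjoint_iff.2 ?_⟩, fun x hx => ?_, fun hbot => ?_⟩
  · rw [sup_ker_aeval_eq_ker_aeval_mul_of_coprime φ hAB, hPφ, LinearMap.ker_zero]
  · have hsmul := apply_aeval_eq_eval_one_smul hφ A x
    rw [LinearMap.mem_ker.1 hx, map_zero] at hsmul
    exact hA.smul_eq_zero.1 hsmul.symm
  · refine bijective_of_aeval_eq_zero_of_isUnit_eval_zero (LinearMap.ext fun x => ?_) hB
    apply LinearMap.ker_eq_bot.1 hbot
    simpa using congr($hPφ x)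

theorem finrank_residueField_tensor_lt_of_isCompl {R X : Type*} [CommRing R] [IsLocalRing R]
    [AddCommGroup X] [Module R X] [Module.Finite R X] {Y Z : Submodule R X} (hYZ : IsCompl Y Z)
    (hY : Y ≠ ⊥) :
    Module.finrank (ResidueField R) (ResidueField R ⊗[R] Z) <
      Module.finrank (ResidueField R) (ResidueField R ⊗[R] X) := by
  have : Module.Finite R Y := .of_surjective _ (Submodule.projectionOnto_surjective hYZ)
  have : Module.Finite R Z := .of_surjective _ (Submodule.projectionOnto_surjective hYZ.symm)
  have : Nontrivial Y := Submodule.nontrivial_iff_ne_bot.2 hY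
  have hpos : 0 < Module.finrank (ResidueField R) (ResidueField R ⊗[R] Y) := by
    rw [Module.finrank_pos_iff, ← not_subsingleton_iff_nontrivial,
      IsLocalRing.subsingleton_tensorProduct, not_subsingleton_iff_nontrivial]
    infer_instance
  let e := (Submodule.prodEquivOfIsCompl Y Z hYZ).symm.baseChange R (ResidueField R) _ _
  have hsum := (e.trans (prodRight R (ResidueField R) (ResidueField R) Y Z)).finrank_eq
  rw [Module.finrank_prod] at hsum
  lia

theorem IsRightApprox.comp_subtype_of_isCompl {R : Type u} [CommRing R] {𝒳 : Set (ModuleCat.{u} R)}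
    (h𝒳 : IsResolving R 𝒳) {X M : ModuleCat.{u} R} {f : X →ₗ[R] M} (hf : IsRightApprox R 𝒳 f)
    {Y Z : Submodule R X} (hYZ : IsCompl Y Z) (hY : Y ≤ LinearMap.ker f) :
    IsRightApprox R 𝒳 (X := ModuleCat.of R Z) (f ∘ₗ Z.subtype) := by
  refine ⟨h𝒳.summandClosed (ModuleCat.of R Z) (ModuleCat.of R Y) <| h𝒳.isoClosed hf.1
    (N := ModuleCat.of R (Z × Y)) (Submodule.prodEquivOfIsCompl Z Y hYZ.symm).symm,
    fun W hW g => ?_⟩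
  obtain ⟨h, rfl⟩ := hf.2 W hW g
  refine ⟨Z.projectionOnto Y hYZ.symm ∘ₗ h, LinearMap.ext fun w => ?_⟩
  have hfst : f (Y.projection Z hYZ (h w)) = 0 := hY (Y.projectionOnto Z hYZ (h w)).2
  simpa [hfst] using congrArg f (Submodule.projection_add_projection_eq_self hYZ (h w))

theorem HasRightApprox.exists_isRightMinimal {R : Type u} [CommRing R] [HenselianLocalRing R]
    {𝒳 : Set (ModuleCat.{u} R)} (h𝒳 : IsResolving R 𝒳) {M : ModuleCat.{u} R}
    (hM : HasRightApprox R 𝒳 M) :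
    ∃ (X : ModuleCat.{u} R) (f : X →ₗ[R] M), IsRightApprox R 𝒳 f ∧ IsRightMinimal f := by
  obtain ⟨X, ⟨f, hf⟩, hmin⟩ := exists_minimalFor_of_wellFoundedLT
    (fun X : ModuleCat.{u} R => ∃ f : X →ₗ[R] M, IsRightApprox R 𝒳 f)
    (fun X => Module.finrank (ResidueField R) (ResidueField R ⊗[R] X)) hM
  have : Module.Finite R X := h𝒳.finite X hf.1
  refine ⟨X, f, hf, fun φ hφ => ?_⟩
  obtain ⟨Y, Z, hYZ, hYf, hY⟩ := exists_isCompl_le_ker_of_comp_eq hφ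
  refine hY (by_contra fun hne => ?_)
  have hlt := finrank_residueField_tensor_lt_of_isCompl hYZ hne
  exact hlt.not_ge (hmin (j := ModuleCat.of R Z) ⟨_, hf.comp_subtype_of_isCompl h𝒳 hYZ hYf⟩ hlt.le)

theorem exists_pushout_isSES {R : Type u} [CommRing R] {A F W X : ModuleCat.{u} R}
    {i : A →ₗ[R] F} {p : F →ₗ[R] W} (hip : IsSES R i p) (g : A →ₗ[R] X) :
    ∃ (P : ModuleCat.{u} R) (j : X →ₗ[R] P) (q : P →ₗ[R] W) (l : F →ₗ[R] P),
      IsSES R j q ∧ j ∘ₗ g = l ∘ₗ i ∧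
      ∀ {M : ModuleCat.{u} R} (a : X →ₗ[R] M) (b : F →ₗ[R] M), a ∘ₗ g = b ∘ₗ i →
        ∃ t : P →ₗ[R] M, t ∘ₗ j = a ∧ t ∘ₗ l = b := by
  let N : Submodule R (X × F) := LinearMap.range (g.prod (-i))
  have hN {T : ModuleCat.{u} R} (a : X →ₗ[R] T) (b : F →ₗ[R] T) (hab : a ∘ₗ g = b ∘ₗ i) :
      N ≤ LinearMap.ker (a.coprod b) := by
    rintro _ ⟨z, rfl⟩
    simpa [← sub_eq_add_neg, sub_eq_zero] using congr($hab z)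
  let j := N.mkQ ∘ₗ LinearMap.inl R X F
  let l := N.mkQ ∘ₗ LinearMap.inr R X F
  let q := N.liftQ ((0 : X →ₗ[R] W).coprod p) (hN _ _ (by simp [hip.2.1.linearMap_comp_eq_zero]))
  have hcomm : j ∘ₗ g = l ∘ₗ i := by
    ext z
    exact (Submodule.Quotient.eq N).2 ⟨z, by simp⟩
  refine ⟨ModuleCat.of R ((X × F) ⧸ N), j, q, l, ⟨?_, ?_, ?_⟩, hcomm, fun a b hab =>
    ⟨N.liftQ (a.coprod b) (hN a b hab), by ext; simp [j], by ext; simp [l]⟩⟩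
  · refine (injective_iff_map_eq_zero j).2 fun x hx => ?_
    obtain ⟨z, hz⟩ := (Submodule.Quotient.mk_eq_zero N).1 hx
    obtain ⟨hgz, hiz⟩ := Prod.ext_iff.1 hz
    have hz0 : z = 0 := hip.1 (by simpa using hiz)
    rw [← show g z = x from hgz, hz0, map_zero]
  · refine LinearMap.exact_of_comp_of_mem_range (by ext; simp [j, q]) fun y hy => ?_
    obtain ⟨⟨x, z⟩, rfl⟩ := N.mkQ_surjective y
    obtain ⟨z, rfl⟩ := (hip.2.1 z).1 (by simpa [q] using hy)
    refine ⟨x + g z, (Submodule.Quotient.eq N).2 ⟨z, by simp⟩⟩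
  · intro w
    obtain ⟨z, rfl⟩ := hip.2.2 w
    exact ⟨l z, by simp [l, q]⟩

/-- Wakamatsu's lemma, as an extension property: the pushout of `F` along `A → ker f ⊆ X` lies in
`𝒳`, so it maps to `X` over `M`, and minimality makes the restriction to `X` of this map
invertible. -/
theorem IsRightApprox.exists_extension_ker {R : Type u} [CommRing R] {𝒳 : Set (ModuleCat.{u} R)}
    (h𝒳 : IsResolving R 𝒳) {M X : ModuleCat.{u} R} {f : X →ₗ[R] M} (hf : IsRightApprox R 𝒳 f)
    (hmin : IsRightMinimal f) {A F W : ModuleCat.{u} R} {i : A →ₗ[R] F} {p : F →ₗ[R] W}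
    (hip : IsSES R i p) (hW : W ∈ 𝒳) (g : A →ₗ[R] LinearMap.ker f) :
    ∃ g' : F →ₗ[R] LinearMap.ker f, g' ∘ₗ i = g := by
  obtain ⟨P, j, q, l, hjq, hcomm, hdesc⟩ := exists_pushout_isSES (X := X) hip
    ((LinearMap.ker f).subtype ∘ₗ g)
  obtain ⟨t, htj, htl⟩ := hdesc f 0 (by ext; simp)
  obtain ⟨h, hh⟩ := hf.2 P (h𝒳.extClosed X P W j q hjq hf.1 hW) t
  have hhj : f ∘ₗ (h ∘ₗ j) = f := by rw [← LinearMap.comp_assoc, hh, htj]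
  let e := LinearEquiv.ofBijective (h ∘ₗ j) (hmin _ hhj)
  have hfe (x : X) : f (e.symm x) = f x :=
    congr($hhj (e.symm x)).symm.trans (congrArg f (e.apply_symm_apply x))
  refine ⟨(e.symm.toLinearMap ∘ₗ h ∘ₗ l).codRestrict _ fun z => ?_, ?_⟩
  · calc f (e.symm (h (l z))) = f (h (l z)) := hfe _
      _ = t (l z) := congr($hh (l z))
      _ = 0 := congr($htl z)
  · ext a
    calc e.symm (h (l (i a))) = e.symm (h (j (g a))) := congr(e.symm (h ($hcomm.symm a)))
      _ = g a := e.symm_apply_apply _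

end MinimalApproximations

section ProjectiveDimension

variable {R : Type u} [CommRing R]

theorem IsSES.shortExact {A B C : ModuleCat.{u} R} {f : A →ₗ[R] B} {g : B →ₗ[R] C}
    (h : IsSES R f g) :
    (ShortComplex.mk (ModuleCat.ofHom f) (ModuleCat.ofHom g)
      (ModuleCat.hom_ext h.2.1.linearMap_comp_eq_zero)).ShortExact where
  exact := (ShortComplex.ShortExact.moduleCat_exact_iff_function_exact _).2 h.2.1
  mono_f := (ModuleCat.mono_iff_injective _).2 h.1
  epi_g := (ModuleCat.epi_iff_surjective _).2 h.2.2

theorem isSES_ker_subtype {B C : ModuleCat.{u} R} {g : B →ₗ[R] C} (hg : Function.Surjective g) :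
    IsSES R (A := ModuleCat.of R (LinearMap.ker g)) (LinearMap.ker g).subtype g :=
  ⟨Subtype.val_injective, LinearMap.exact_subtype_ker_map g, hg⟩

theorem hasProjectiveDimensionLT_fin_pi {M : Type u} [AddCommGroup M] [Module R M] {n : ℕ}
    (hM : HasProjectiveDimensionLT (ModuleCat.of R M) n) (m : ℕ) :
    HasProjectiveDimensionLT (ModuleCat.of R (Fin m → M)) n := by
  induction m with
  | zero =>
    have := (ModuleCat.isZero_of_subsingleton
      (ModuleCat.of R (Fin 0 → M))).hasProjectiveDimensionLT_zero
    exact hasProjectiveDimensionLT_of_ge _ 0 n n.zero_le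
  | succ m ih =>
    have hprod : IsSES R (A := ModuleCat.of R M) (B := ModuleCat.of R (M × (Fin m → M)))
        (C := ModuleCat.of R (Fin m → M)) (LinearMap.inl R _ _) (LinearMap.snd R _ _) :=
      ⟨LinearMap.inl_injective, .inl_snd, Prod.snd_surjective⟩
    have := hprod.shortExact.hasProjectiveDimensionLT_X₂ n hM ih
    exact hasProjectiveDimensionLT_of_iso
      (Fin.consLinearEquiv R fun _ : Fin (m + 1) => M).toModuleIso n

theorem hasProjectiveDimensionLT_restrictScalars {S : Type u} [CommRing S] [IsNoetherianRing S]
    [Algebra R S] {c : ℕ} (hS : HasProjectiveDimensionLT (ModuleCat.of R S) c) {n : ℕ}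
    {N : Type u} [AddCommGroup N] [Module S N] [Module.Finite S N] [Module R N]
    [IsScalarTower R S N] (hN : HasProjectiveDimensionLE (ModuleCat.of S N) n) :
    HasProjectiveDimensionLT (ModuleCat.of R N) (n + c) := by
  obtain ⟨m, f, hf⟩ := Module.Finite.exists_fin' S N
  induction n generalizing N m with
  | zero =>
    have : Module.Projective S N := (IsProjective.iff_projective N).2 inferInstance
    obtain ⟨s, hs⟩ := Module.projective_lifting_property f .id hf
    have hretract : Retract (ModuleCat.of R N) (ModuleCat.of R (Fin m → S)) :=
      ⟨ModuleCat.ofHom (s.restrictScalars R), ModuleCat.ofHom (f.restrictScalars R),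
        ModuleCat.hom_ext (LinearMap.ext fun y => congr($hs y))⟩
    have := hasProjectiveDimensionLT_fin_pi hS m
    rw [zero_add]
    exact hretract.hasProjectiveDimensionLT c
  | succ n ih =>
    have hker := (isSES_ker_subtype (B := ModuleCat.of S (Fin m → S)) (C := ModuleCat.of S N)
      hf).shortExact.hasProjectiveDimensionLT_X₁ (n + 1) inferInstance hN
    obtain ⟨l, g, hg⟩ := Module.Finite.exists_fin' S (LinearMap.ker f)
    have hsyz := ih hker l g hg
    have := hasProjectiveDimensionLT_fin_pi hS m
    have hses : IsSES R (A := ModuleCat.of R (LinearMap.ker f))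
        (B := ModuleCat.of R (Fin m → S)) (C := ModuleCat.of R N)
        ((LinearMap.ker f).subtype.restrictScalars R) (f.restrictScalars R) :=
      ⟨Subtype.val_injective, LinearMap.exact_subtype_ker_map f, hf⟩
    rw [add_right_comm]
    exact hses.shortExact.hasProjectiveDimensionLT_X₃ _ hsyz
      (hasProjectiveDimensionLT_of_ge _ c _ (by lia))

theorem hasProjectiveDimensionLE_quotient_ofList [IsLocalRing R] [IsNoetherianRing R] {rs : List R}
    (hrs : RingTheory.Sequence.IsWeaklyRegular R rs) (hmem : ∀ r ∈ rs, r ∈ maximalIdeal R) :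
    HasProjectiveDimensionLE (ModuleCat.of R (R ⧸ Ideal.ofList rs)) rs.length := by
  have hpd := ModuleCat.projectiveDimension_quotient_eq_add_length_of_isWeaklyRegular
    (ModuleCat.of R R) rs hrs hmem
  have hR : projectiveDimension (ModuleCat.of R R) ≤ (0 : ℕ) :=
    (projectiveDimension_le_iff _ 0).2 (inferInstanceAs (HasProjectiveDimensionLT _ 1))
  have : HasProjectiveDimensionLE
      (ModuleCat.of R (R ⧸ Ideal.ofList rs • (⊤ : Submodule R R))) rs.length := by
    rw [← projectiveDimension_le_iff, hpd]
    simpa using add_le_add_left hR (rs.length : WithBot ℕ∞)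
  exact hasProjectiveDimensionLT_of_iso (Submodule.quotEquivOfEq
    (Ideal.ofList rs • (⊤ : Submodule R R)) (Ideal.ofList rs) (by simp)).toModuleIso _

end ProjectiveDimension

section RegularLocalRings

theorem exists_mem_maximalIdeal_notMem_sq_notMem_minimalPrimes {Q : Type*} [CommRing Q]
    [IsLocalRing Q] [IsNoetherianRing Q] (hQ : ringKrullDim Q ≠ 0) :
    ∃ x ∈ maximalIdeal Q, x ∉ maximalIdeal Q ^ 2 ∧ ∀ P ∈ minimalPrimes Q, x ∉ P := by
  have hht : (maximalIdeal Q).height ≠ 0 := fun h0 =>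
    hQ (by rw [← IsLocalRing.maximalIdeal_height_eq_ringKrullDim, h0]; rfl)
  by_contra! hcover
  have hsub : (maximalIdeal Q : Set Q) ⊆
      ⋃ I ∈ insert (maximalIdeal Q ^ 2) (minimalPrimes Q), ((id I : Ideal Q) : Set Q) := by
    intro x hx
    by_cases hx2 : x ∈ maximalIdeal Q ^ 2
    · exact Set.mem_biUnion (Set.mem_insert _ _) hx2
    · obtain ⟨P, hP, hxP⟩ := hcover x hx hx2
      exact Set.mem_biUnion (Set.mem_insert_of_mem _ hP) hxP
  obtain ⟨P, rfl | hP, hle⟩ := (Ideal.subset_union_prime_finite (f := id)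
    ((minimalPrimes.finite_of_isNoetherianRing Q).insert _) (maximalIdeal Q ^ 2)
    (maximalIdeal Q ^ 2) fun P hP hne _ => (Set.mem_of_mem_insert_of_ne hP hne).1.1).1 hsub
  · have hbot : maximalIdeal Q = ⊥ := Submodule.eq_bot_of_le_smul_of_le_jacobson_bot _ _
      (IsNoetherian.noetherian _) (by simpa [pow_two] using hle)
      (IsLocalRing.maximalIdeal_le_jacobson _)
    exact hht (by rw [hbot, Ideal.height_bot])
  · have hPprime : P.IsPrime := hP.1.1
    have hPmax : maximalIdeal Q = P := le_antisymm hle (le_maximalIdeal hPprime.ne_top)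
    exact hht (by rwa [hPmax, Ideal.height_eq_zero_iff])

theorem isDomain_of_isPrime_span_singleton {Q : Type*} [CommRing Q] [IsLocalRing Q]
    [IsNoetherianRing Q] {x : Q} (hx : x ∈ maximalIdeal Q) (hprime : (Ideal.span {x}).IsPrime)
    (hmin : ∀ P ∈ minimalPrimes Q, x ∉ P) : IsDomain Q := by
  obtain ⟨P, hP, hPx⟩ := Ideal.exists_minimalPrimes_le (bot_le : ⊥ ≤ Ideal.span {x})
  have hPprime : P.IsPrime := hP.1.1
  have hle : P ≤ maximalIdeal Q • P := by
    intro y hy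
    obtain ⟨a, rfl⟩ := Ideal.mem_span_singleton'.1 (hPx hy)
    rw [mul_comm]
    exact Submodule.smul_mem_smul hx ((hPprime.mem_or_mem hy).resolve_right (hmin P hP))
  have hbot : P = ⊥ := Submodule.eq_bot_of_le_smul_of_le_jacobson_bot _ P
    (IsNoetherian.noetherian _) hle (IsLocalRing.maximalIdeal_le_jacobson _)
  rw [hbot] at hPprime
  exact IsDomain.of_bot_isPrime Q

theorem exists_finite_maximalIdeal_eq_span_insert {Q : Type*} [CommRing Q] [IsLocalRing Q]
    [IsNoetherianRing Q] {x : Q} (hx : x ∈ maximalIdeal Q) (hx2 : x ∉ maximalIdeal Q ^ 2) :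
    ∃ T : Set Q, T.Finite ∧ T.ncard + 1 ≤ (maximalIdeal Q).spanFinrank ∧
      maximalIdeal Q = Ideal.span (insert x T) := by
  let v : CotangentSpace Q := (maximalIdeal Q).toCotangent ⟨x, hx⟩
  have hv : v ≠ 0 := fun h0 => hx2 (((maximalIdeal Q).toCotangent_eq_zero ⟨x, hx⟩).1 h0)
  have hli : LinearIndepOn (ResidueField Q) id {v} := LinearIndepOn.singleton (by simpa using hv)
  let b := hli.extend (Set.subset_univ _)
  have hb : LinearIndepOn (ResidueField Q) id b := hli.linearIndepOn_extend _
  have hfin : b.Finite := hb.finite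
  have hvb : v ∈ b := hli.subset_extend _ rfl
  have hspan : Submodule.span (ResidueField Q) b = ⊤ := by
    simpa using hli.span_extend_eq_span (Set.subset_univ _)
  have hcard : b.ncard = (maximalIdeal Q).spanFinrank := by
    rw [spanFinrank_maximalIdeal_eq_finrank_cotangentSpace]
    exact (Module.finrank_eq_nat_card_basis
      (.mk hb.linearIndependent (by simp [hspan]) : Module.Basis b _ _)).symm
  obtain ⟨σ, hσ⟩ := (maximalIdeal Q).toCotangent_surjective.hasRightInverse
  let T : Set (maximalIdeal Q) := σ '' (b \ {v})
  have hT : Submodule.span Q (insert ⟨x, hx⟩ T) = ⊤ := by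
    rw [← CotangentSpace.span_image_eq_top_iff, ← hspan, Set.image_insert_eq, Set.image_image]
    simp only [hσ _, Set.image_id']
    rw [Set.insert_sdiff_self_of_mem hvb]
  refine ⟨Subtype.val '' T, (hfin.sdiff.image _).image _, ?_, ?_⟩
  · rw [← hcard, ← Set.ncard_sdiff_singleton_add_one hvb hfin, add_le_add_iff_right]
    exact (Set.ncard_image_le (hfin.sdiff.image _)).trans
      (Set.ncard_image_le hfin.sdiff)
  · have hmap := congrArg (Submodule.map (maximalIdeal Q).subtype) hT
    rw [Submodule.map_span, Submodule.map_top, Submodule.range_subtype, Set.image_insert_eq] at hmap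
    exact hmap.symm

theorem spanFinrank_map_mk_maximalIdeal_add_one_le {Q : Type*} [CommRing Q] [IsLocalRing Q]
    [IsNoetherianRing Q] {x : Q} (hx : x ∈ maximalIdeal Q) (hx2 : x ∉ maximalIdeal Q ^ 2) :
    ((maximalIdeal Q).map (Ideal.Quotient.mk (Ideal.span {x}))).spanFinrank + 1 ≤
      (maximalIdeal Q).spanFinrank := by
  obtain ⟨T, hfin, hcard, hT⟩ := exists_finite_maximalIdeal_eq_span_insert hx hx2
  have hmap : (maximalIdeal Q).map (Ideal.Quotient.mk (Ideal.span {x})) =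
      Ideal.span (Ideal.Quotient.mk (Ideal.span {x}) '' T) := by
    rw [hT, Ideal.map_span, Set.image_insert_eq,
      Ideal.Quotient.eq_zero_iff_mem.2 (Ideal.mem_span_singleton_self x), Ideal.span_insert_zero]
  rw [hmap]
  exact (Nat.succ_le_succ ((Submodule.spanFinrank_span_le_ncard_of_finite (hfin.image _)).trans
    (Set.ncard_image_le hfin))).trans hcard

theorem exists_isRegularLocalRing_quotient_span_singleton {Q : Type*} [CommRing Q]
    [IsRegularLocalRing Q] {n : ℕ} (hn : ringKrullDim Q = (n + 1 : ℕ)) :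
    ∃ x ∈ maximalIdeal Q, (∀ P ∈ minimalPrimes Q, x ∉ P) ∧
      IsRegularLocalRing (Q ⧸ Ideal.span {x}) ∧ ringKrullDim (Q ⧸ Ideal.span {x}) = n := by
  obtain ⟨x, hx, hx2, hmin⟩ := exists_mem_maximalIdeal_notMem_sq_notMem_minimalPrimes
    (Q := Q) (by rw [hn]; exact_mod_cast n.succ_ne_zero)
  have : Nontrivial (Q ⧸ Ideal.span {x}) := Ideal.Quotient.nontrivial_iff.2 (by
    rwa [Ne, Ideal.span_singleton_eq_top])
  have : IsLocalRing (Q ⧸ Ideal.span {x}) :=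
    IsLocalRing.of_surjective' (Ideal.Quotient.mk _) Ideal.Quotient.mk_surjective
  have hmax : (maximalIdeal Q).map (Ideal.Quotient.mk (Ideal.span {x})) =
      maximalIdeal (Q ⧸ Ideal.span {x}) :=
    IsLocalRing.eq_maximalIdeal <| Ideal.IsMaximal.map_of_surjective_of_ker_le
      Ideal.Quotient.mk_surjective (by rwa [Ideal.mk_ker, Ideal.span_singleton_le_iff_mem])
  have hrank : (maximalIdeal (Q ⧸ Ideal.span {x})).spanFinrank ≤ n := by
    have hQ := IsRegularLocalRing.spanFinrank_maximalIdeal (R := Q)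
    have hle := spanFinrank_map_mk_maximalIdeal_add_one_le hx hx2
    rw [hn, Nat.cast_inj] at hQ
    rw [hmax] at hle
    lia
  have hdim : (n : WithBot ℕ∞) ≤ ringKrullDim (Q ⧸ Ideal.span {x}) := by
    have hle := ringKrullDim_le_ringKrullDim_quotient_add_card ({x} : Finset Q) (by
      simpa [IsLocalRing.ringJacobson_eq_maximalIdeal] using hx)
    rw [hn, Finset.coe_singleton, Finset.card_singleton, Nat.cast_add] at hle
    exact ENat.WithBot.add_le_add_natCast_right_iff.1 hle
  have hrank' : ((maximalIdeal (Q ⧸ Ideal.span {x})).spanFinrank : WithBot ℕ∞) ≤ n := by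
    exact_mod_cast hrank
  exact ⟨x, hx, hmin, .of_spanFinrank_maximalIdeal_le _ (hrank'.trans hdim),
    le_antisymm ((ringKrullDim_le_spanFinrank_maximalIdeal _).trans hrank') hdim⟩

theorem isField_of_isRegularLocalRing_of_ringKrullDim_eq_zero {Q : Type*} [CommRing Q]
    [IsRegularLocalRing Q] (hQ : ringKrullDim Q = 0) : IsField Q := by
  have hrank := IsRegularLocalRing.spanFinrank_maximalIdeal (R := Q)
  rw [hQ, Nat.cast_eq_zero] at hrank
  exact IsLocalRing.isField_iff_maximalIdeal_eq.2
    ((Submodule.spanFinrank_eq_zero_iff_eq_bot (IsNoetherian.noetherian _)).1 hrank)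

theorem isDomain_of_isRegularLocalRing {Q : Type*} [CommRing Q] [IsRegularLocalRing Q] :
    IsDomain Q := by
  obtain ⟨n, hn⟩ : ∃ n : ℕ, ringKrullDim Q = n :=
    ⟨_, (IsRegularLocalRing.spanFinrank_maximalIdeal (R := Q)).symm⟩
  induction n generalizing Q with
  | zero => exact (isField_of_isRegularLocalRing_of_ringKrullDim_eq_zero hn).isDomain
  | succ n ih =>
    obtain ⟨x, hx, hmin, hreg, hdim⟩ := exists_isRegularLocalRing_quotient_span_singleton hn
    exact isDomain_of_isPrime_span_singleton hx
      ((Ideal.Quotient.isDomain_iff_prime _).1 (ih hdim)) hmin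

theorem hasProjectiveDimensionLE_of_isRegularLocalRing {Q : Type u} [CommRing Q]
    [IsRegularLocalRing Q] {n : ℕ} (hn : ringKrullDim Q = n) (M : Type u) [AddCommGroup M]
    [Module Q M] [Module.Finite Q M] : HasProjectiveDimensionLE (ModuleCat.of Q M) n := by
  induction n generalizing Q M with
  | zero =>
    let := (isField_of_isRegularLocalRing_of_ringKrullDim_eq_zero hn).toField
    exact inferInstanceAs (HasProjectiveDimensionLT _ 1)
  | succ n ih =>
    obtain ⟨x, hx, hmin, hQx, hdim⟩ := exists_isRegularLocalRing_quotient_span_singleton hn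
    have := isDomain_of_isRegularLocalRing (Q := Q)
    obtain ⟨P, hP, -⟩ := Ideal.exists_minimalPrimes_le (bot_le : ⊥ ≤ maximalIdeal Q)
    have hreg : IsSMulRegular Q x :=
      IsSMulRegular.of_ne_zero fun h0 => hmin P hP (h0 ▸ P.zero_mem)
    obtain ⟨m, f, hf⟩ := Module.Finite.exists_fin' Q M
    have hregker : IsSMulRegular (LinearMap.ker f) x :=
      (IsSMulRegular.pi fun _ => hreg : IsSMulRegular (Fin m → Q) x).submodule _ _
    have hquot : HasProjectiveDimensionLT (ModuleCat.of Q (Q ⧸ Ideal.span {x})) 2 := by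
      rw [← Ideal.ofList_singleton]
      exact hasProjectiveDimensionLE_quotient_ofList (rs := [x]) (by simpa using hreg)
        (by simpa using hx)
    have : Module.Finite (Q ⧸ Ideal.span {x}) (QuotSMulTop x (LinearMap.ker f)) :=
      Module.Finite.of_restrictScalars_finite Q _ _
    have hpd := hasProjectiveDimensionLT_restrictScalars hquot
      (ih hdim (QuotSMulTop x (LinearMap.ker f)))
    have hker : HasProjectiveDimensionLE (ModuleCat.of Q (LinearMap.ker f)) n := by
      have hsucc := (projectiveDimension_le_iff _ (n + 1)).2 hpd
      rw [ModuleCat.projectiveDimension_quotSMulTop_eq_succ_of_isSMulRegular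
        (ModuleCat.of Q (LinearMap.ker f)) x hregker hx, Nat.cast_add] at hsucc
      exact (projectiveDimension_le_iff _ n).1 (ENat.WithBot.add_le_add_natCast_right_iff.1 hsucc)
    exact (isSES_ker_subtype (B := ModuleCat.of Q (Fin m → Q)) (C := ModuleCat.of Q M)
      hf).shortExact.hasProjectiveDimensionLT_X₃ _ hker inferInstance

end RegularLocalRings

section ChangeOfRings

open TensorProduct

theorem IsSES.exists_isSES_comp {R : Type u} [CommRing R] {W V A F C : ModuleCat.{u} R}
    {i : W →ₗ[R] V} {p : V →ₗ[R] A} (hip : IsSES R i p) {j : V →ₗ[R] F} {q : F →ₗ[R] C}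
    (hjq : IsSES R j q) :
    ∃ (D : ModuleCat.{u} R) (d : F →ₗ[R] D) (a : A →ₗ[R] D) (b : D →ₗ[R] C),
      IsSES R (j ∘ₗ i) d ∧ IsSES R a b := by
  let N : Submodule R F := LinearMap.range (j ∘ₗ i)
  let a : A →ₗ[R] F ⧸ N := (LinearMap.ker p).liftQ (N.mkQ ∘ₗ j) (fun v hv => by
    obtain ⟨w, rfl⟩ := (hip.2.1 v).1 hv
    exact (Submodule.Quotient.mk_eq_zero N).2 ⟨w, rfl⟩) ∘ₗ
      (p.quotKerEquivOfSurjective hip.2.2).symm.toLinearMap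
  let b : F ⧸ N →ₗ[R] C := N.liftQ q (by
    rintro _ ⟨w, rfl⟩
    exact hjq.2.1.apply_apply_eq_zero (i w))
  have ha (v : V) : a (p v) = N.mkQ (j v) := by simp [a]
  refine ⟨ModuleCat.of R (F ⧸ N), N.mkQ, a, b, ⟨hjq.1.comp hip.1, LinearMap.exact_map_mkQ_range _,
    N.mkQ_surjective⟩, (injective_iff_map_eq_zero a).2 fun y hy => ?_, ?_, ?_⟩
  · obtain ⟨v, rfl⟩ := hip.2.2 y
    obtain ⟨w, hw⟩ := (Submodule.Quotient.mk_eq_zero N).1 ((ha v).symm.trans hy)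
    rw [← hjq.1 hw, hip.2.1.apply_apply_eq_zero]
  · refine LinearMap.exact_of_comp_of_mem_range (LinearMap.ext fun y => ?_) fun z hz => ?_
    · obtain ⟨v, rfl⟩ := hip.2.2 y
      exact (congrArg b (ha v)).trans (hjq.2.1.apply_apply_eq_zero v)
    · obtain ⟨f, rfl⟩ := N.mkQ_surjective z
      obtain ⟨v, rfl⟩ := (hjq.2.1 f).1 hz
      exact ⟨p v, ha v⟩
  · exact fun c => (hjq.2.2 c).imp' N.mkQ fun _ => id

variable {S R : Type u} [CommRing S] [CommRing R] [Algebra S R] {x : S}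

theorem exact_lsmul_mk_one (hsurj : Function.Surjective (algebraMap S R))
    (hker : RingHom.ker (algebraMap S R) = Ideal.span {x}) (U : Type*) [AddCommGroup U]
    [Module S U] : Function.Exact (LinearMap.lsmul S U x) (TensorProduct.mk S R U 1) := by
  have hx : Function.Exact (LinearMap.lsmul S S x) (Algebra.linearMap S R) := fun s => by
    change s ∈ RingHom.ker (algebraMap S R) ↔ _
    rw [hker, Ideal.mem_span_singleton']
    exact exists_congr fun t => by rw [mul_comm]; rfl
  refine (rTensor_exact U hx hsurj).of_ladder_linearEquiv_of_exact
    (e₁ := TensorProduct.lid S U) (e₂ := TensorProduct.lid S U) (e₃ := .refl S (R ⊗[S] U)) ?_ ?_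
  · ext u
    simp
  · ext u
    simp

theorem IsSES.baseChange (hsurj : Function.Surjective (algebraMap S R))
    (hker : RingHom.ker (algebraMap S R) = Ideal.span {x}) {A B C : ModuleCat.{u} S}
    {i : A →ₗ[S] B} {p : B →ₗ[S] C} (hip : IsSES S i p) (hC : IsSMulRegular C x) :
    IsSES R (A := ModuleCat.of R (R ⊗[S] A)) (B := ModuleCat.of R (R ⊗[S] B))
      (C := ModuleCat.of R (R ⊗[S] C)) (i.baseChange R) (p.baseChange R) := by
  refine ⟨(injective_iff_map_eq_zero _).2 fun z hz => ?_, lTensor_exact R hip.2.1 hip.2.2,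
    LinearMap.lTensor_surjective R hip.2.2⟩
  obtain ⟨a, rfl⟩ := TensorProduct.mk_surjective S A R hsurj z
  obtain ⟨b, hb : x • b = i a⟩ := (exact_lsmul_mk_one hsurj hker B (i a)).1 hz
  have hpb : x • p b = 0 := by rw [← map_smul, hb, hip.2.1.apply_apply_eq_zero]
  obtain ⟨a', rfl⟩ := (hip.2.1 b).1 (hC.right_eq_zero_of_smul hpb)
  rw [← map_smul] at hb
  exact (exact_lsmul_mk_one hsurj hker A a).2 ⟨a', hip.1 hb⟩

/-- The snake lemma for multiplication by `x` identifies `W` with `Tor₁(R, W)`. -/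
theorem IsSES.exists_exact_baseChange (hsurj : Function.Surjective (algebraMap S R))
    (hker : RingHom.ker (algebraMap S R) = Ideal.span {x}) {V F : ModuleCat.{u} S} {W : Type u}
    [AddCommGroup W] [Module S W] [Module R W] [IsScalarTower S R W]
    {i : V →ₗ[S] F} {p : F →ₗ[S] W} (hip : IsSES S (C := ModuleCat.of S W) i p)
    (hF : IsSMulRegular F x) :
    ∃ δ : W →ₗ[R] R ⊗[S] V, Function.Injective δ ∧ Function.Exact δ (i.baseChange R) := by
  have hxW : LinearMap.lsmul S W x = 0 := LinearMap.ext fun w => by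
    have hx : algebraMap S R x = 0 := by
      rw [← RingHom.mem_ker, hker]
      exact Ideal.mem_span_singleton_self x
    rw [LinearMap.lsmul_apply, ← algebraMap_smul R, hx, zero_smul, LinearMap.zero_apply]
  have hW : Function.Exact (LinearMap.id : W →ₗ[S] W) (LinearMap.lsmul S W x) := by
    rw [hxW]
    exact fun w => ⟨fun _ => ⟨w, rfl⟩, fun _ => rfl⟩
  let δ : W →ₗ[S] R ⊗[S] V := SnakeLemma.δ' (LinearMap.lsmul S V x) (LinearMap.lsmul S F x)
    (LinearMap.lsmul S W x) i p hip.2.1 i p hip.2.1 (by ext; simp) (by ext; simp) LinearMap.id hW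
    (TensorProduct.mk S R V 1) (exact_lsmul_mk_one hsurj hker V) hip.2.2 hip.1
  have hker_δ : Function.Exact (0 : PUnit.{u + 1} →ₗ[S] W) δ :=
    SnakeLemma.exact_δ'_right (LinearMap.lsmul S V x) (LinearMap.lsmul S F x)
      (LinearMap.lsmul S W x) i p hip.2.1 i p hip.2.1 _ _ 0
      ((LinearMap.exact_zero_iff_injective PUnit.{u + 1} _).2 hF) LinearMap.id hW _ _ hip.2.2
      hip.1 0 (by simp) Function.injective_id
  have hrange_δ : Function.Exact δ (i.baseChange R) :=
    SnakeLemma.exact_δ'_left (LinearMap.lsmul S V x) (LinearMap.lsmul S F x)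
      (LinearMap.lsmul S W x) i p hip.2.1 i p hip.2.1 _ _ LinearMap.id hW _ _
      (TensorProduct.mk S R F 1) (exact_lsmul_mk_one hsurj hker F) hip.2.2 hip.1
      ((i.baseChange R).restrictScalars S) rfl (TensorProduct.mk_surjective S V R hsurj)
  exact ⟨δ.extendScalarsOfSurjective hsurj,
    (LinearMap.exact_zero_iff_injective PUnit.{u + 1} δ).1 hker_δ, hrange_δ⟩

/-- The lift of a class `𝒴` of `R`-modules along a surjection `S → R` with kernel `(x)`: the finite
`S`-modules `U` on which `x` is regular and whose reduction `U / x U = R ⊗[S] U` lies in `𝒴`. -/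
def regularLift (R : Type u) [CommRing R] [Algebra S R] (x : S) (𝒴 : Set (ModuleCat.{u} R)) :
    Set (ModuleCat.{u} S) :=
  {U | Module.Finite S U ∧ IsSMulRegular U x ∧ ModuleCat.of R (R ⊗[S] U) ∈ 𝒴}

theorem IsResolving.regularLift [IsNoetherianRing S] {𝒴 : Set (ModuleCat.{u} R)}
    (h𝒴 : IsResolving R 𝒴) (hsurj : Function.Surjective (algebraMap S R))
    (hker : RingHom.ker (algebraMap S R) = Ideal.span {x}) (hx : IsSMulRegular S x) :
    IsResolving S (regularLift R x 𝒴) where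
  finite _ hM := hM.1
  isoClosed hM e := by
    obtain ⟨hfin, hreg, hmem⟩ := hM
    exact ⟨.equiv e, (e.isSMulRegular_congr x).1 hreg,
      h𝒴.isoClosed hmem (e.baseChange S R _ _)⟩
  freeMem M _ _ := ⟨inferInstance,
    ((Module.Free.chooseBasis S M).equivFun.isSMulRegular_congr x).2 (IsSMulRegular.pi fun _ => hx),
    h𝒴.freeMem _ inferInstance inferInstance⟩
  summandClosed M N hMN := by
    obtain ⟨hfin, hreg, hmem⟩ := hMN
    exact ⟨.of_surjective (LinearMap.fst S M N) Prod.fst_surjective,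
      hreg.of_injective (LinearMap.inl S M N) LinearMap.inl_injective,
      h𝒴.summandClosed _ (ModuleCat.of R (R ⊗[S] N))
        (h𝒴.isoClosed hmem (TensorProduct.prodRight S R R M N))⟩
  extClosed A B C i p hip hA hC := by
    have := hA.1
    have := hC.1
    exact ⟨Module.Finite.of_exact hip.2.1 hip.2.2,
      isSMulRegular_of_range_eq_ker hip.1 (LinearMap.exact_iff.1 hip.2.1).symm hA.2.1 hC.2.1,
      h𝒴.extClosed _ _ _ _ _ (hip.baseChange hsurj hker hC.2.1) hA.2.2 hC.2.2⟩
  kerClosed A B C i p hip hB hC := by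
    have := hB.1
    exact ⟨Module.Finite.of_injective i hip.1, hB.2.1.of_injective i hip.1,
      h𝒴.kerClosed _ _ _ _ _ (hip.baseChange hsurj hker hC.2.1) hB.2.2 hC.2.2⟩

/-- `W` is, up to isomorphism, a first syzygy of a module in `𝒴`: it embeds in a finite free module
with cokernel in `𝒴`. -/
def IsFirstSyzygyIn (R : Type u) [CommRing R] (𝒴 : Set (ModuleCat.{u} R)) (W : ModuleCat.{u} R) :
    Prop :=
  ∃ (F C : ModuleCat.{u} R) (j : W →ₗ[R] F) (q : F →ₗ[R] C),
    Module.Finite R F ∧ Module.Free R F ∧ IsSES R j q ∧ C ∈ 𝒴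

theorem IsFirstSyzygyIn.of_isSES {𝒴 : Set (ModuleCat.{u} R)} (h𝒴 : IsResolving R 𝒴)
    {W V A : ModuleCat.{u} R} (hV : IsFirstSyzygyIn R 𝒴 V) {i : W →ₗ[R] V} {p : V →ₗ[R] A}
    (hip : IsSES R i p) (hA : A ∈ 𝒴) : IsFirstSyzygyIn R 𝒴 W := by
  obtain ⟨F, C, j, q, hfin, hfree, hjq, hC⟩ := hV
  obtain ⟨D, d, a, b, hjd, hab⟩ := hip.exists_isSES_comp hjq
  exact ⟨F, D, j ∘ₗ i, d, hfin, hfree, hjd, h𝒴.extClosed A D C a b hab hA hC⟩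

theorem IsFirstSyzygyIn.baseChange {𝒴 : Set (ModuleCat.{u} R)}
    (hsurj : Function.Surjective (algebraMap S R))
    (hker : RingHom.ker (algebraMap S R) = Ideal.span {x}) {U : ModuleCat.{u} S}
    (hU : IsFirstSyzygyIn S (regularLift R x 𝒴) U) :
    IsFirstSyzygyIn R 𝒴 (ModuleCat.of R (R ⊗[S] U)) := by
  obtain ⟨F, C, j, q, hfin, hfree, hjq, -, hCreg, hC⟩ := hU
  exact ⟨_, _, _, _, inferInstance, inferInstance, hjq.baseChange hsurj hker hCreg, hC⟩

/-- The exact sequence is `0 → Tor₁(R, W) → R ⊗ V → R ⊗ F → R ⊗ W → 0`, in which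
`Tor₁(R, W) ≅ W ≅ R ⊗ W`. -/
theorem IsSES.exists_isSES_baseChange {𝒴 : Set (ModuleCat.{u} R)} (h𝒴 : IsResolving R 𝒴)
    (hsurj : Function.Surjective (algebraMap S R))
    (hker : RingHom.ker (algebraMap S R) = Ideal.span {x}) {V F : ModuleCat.{u} S} {W : Type u}
    [AddCommGroup W] [Module S W] [Module R W] [IsScalarTower S R W]
    {i : V →ₗ[S] F} {p : F →ₗ[S] W} (hip : IsSES S (C := ModuleCat.of S W) i p)
    [Module.Finite S F] [Module.Free S F]
    (hF : IsSMulRegular F x) (hW : ModuleCat.of R W ∈ 𝒴) :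
    ∃ (Ω : ModuleCat.{u} R) (δ : W →ₗ[R] R ⊗[S] V) (q : R ⊗[S] V →ₗ[R] Ω), Ω ∈ 𝒴 ∧
      IsSES R (A := ModuleCat.of R W) (B := ModuleCat.of R (R ⊗[S] V)) δ q := by
  obtain ⟨δ, hδ, hδi⟩ := hip.exists_exact_baseChange hsurj hker hF
  have : TensorProduct.CompatibleSMul S R R W := .of_algebraMap_surjective R W hsurj
  have : TensorProduct.CompatibleSMul R S R W := inferInstance
  have : TensorProduct.CompatibleSMul S R R R := .of_algebraMap_surjective R R hsurj
  let e : R ⊗[S] W ≃ₗ[R] W := TensorProduct.lidOfCompatibleSMul S R W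
  have hexact : Function.Exact (i.baseChange R) (p.baseChange R) := lTensor_exact R hip.2.1 hip.2.2
  have hΩ : ModuleCat.of R (LinearMap.ker (p.baseChange R)) ∈ 𝒴 :=
    h𝒴.kerClosed _ _ _ _ _ (isSES_ker_subtype (B := ModuleCat.of R (R ⊗[S] F))
      (C := ModuleCat.of R (R ⊗[S] W)) (LinearMap.lTensor_surjective R hip.2.2))
      (h𝒴.freeMem _ inferInstance inferInstance) (h𝒴.isoClosed hW e.symm)
  refine ⟨_, δ, (i.baseChange R).codRestrict _ hexact.apply_apply_eq_zero, hΩ, hδ, fun z => ?_,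
    fun y => ?_⟩
  · exact Subtype.ext_iff.trans (hδi z)
  · exact ((hexact y).1 y.2).imp fun _ => Subtype.ext

theorem IsSES.mem_regularLift [IsNoetherianRing S] {𝒴 : Set (ModuleCat.{u} R)}
    (h𝒴 : IsResolving R 𝒴) (hsurj : Function.Surjective (algebraMap S R))
    (hker : RingHom.ker (algebraMap S R) = Ideal.span {x}) {V F : ModuleCat.{u} S} {W : Type u}
    [AddCommGroup W] [Module S W] [Module R W] [IsScalarTower S R W]
    {i : V →ₗ[S] F} {p : F →ₗ[S] W} (hip : IsSES S (C := ModuleCat.of S W) i p)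
    [Module.Finite S F] [Module.Free S F] (hF : IsSMulRegular F x) (hW : ModuleCat.of R W ∈ 𝒴) :
    V ∈ regularLift R x 𝒴 := by
  obtain ⟨Ω, δ, q, hΩ, hδq⟩ := hip.exists_isSES_baseChange h𝒴 hsurj hker hF hW
  exact ⟨Module.Finite.of_injective i hip.1, hF.of_injective i hip.1,
    h𝒴.extClosed _ _ _ δ q hδq hW hΩ⟩

theorem IsFirstSyzygyIn.of_isSES_regularLift {𝒴 : Set (ModuleCat.{u} R)}
    (h𝒴 : IsResolving R 𝒴) (hsurj : Function.Surjective (algebraMap S R))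
    (hker : RingHom.ker (algebraMap S R) = Ideal.span {x}) {V F : ModuleCat.{u} S} {W : Type u}
    [AddCommGroup W] [Module S W] [Module R W] [IsScalarTower S R W]
    {i : V →ₗ[S] F} {p : F →ₗ[S] W} (hip : IsSES S (C := ModuleCat.of S W) i p)
    [Module.Finite S F] [Module.Free S F] (hF : IsSMulRegular F x) (hW : ModuleCat.of R W ∈ 𝒴)
    (hV : IsFirstSyzygyIn S (regularLift R x 𝒴) V) :
    IsFirstSyzygyIn R 𝒴 (ModuleCat.of R W) := by
  obtain ⟨Ω, δ, q, hΩ, hδq⟩ := hip.exists_isSES_baseChange h𝒴 hsurj hker hF hW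
  exact (hV.baseChange hsurj hker).of_isSES h𝒴 hδq hΩ

theorem free_of_surjective_algebraMap (hsurj : Function.Surjective (algebraMap S R)) (W : Type*)
    [AddCommGroup W] [Module S W] [Module R W] [IsScalarTower S R W] [Module.Free S W] :
    Module.Free R W := by
  have : TensorProduct.CompatibleSMul S R R W := .of_algebraMap_surjective R W hsurj
  have : TensorProduct.CompatibleSMul S R R R := .of_algebraMap_surjective R R hsurj
  exact .of_equiv (TensorProduct.lidOfCompatibleSMul S R W)

theorem isFirstSyzygyIn_of_free {𝒴 : Set (ModuleCat.{u} R)} (h𝒴 : IsResolving R 𝒴)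
    (W : ModuleCat.{u} R) [Module.Finite R W] [Module.Free R W] : IsFirstSyzygyIn R 𝒴 W :=
  ⟨W, ModuleCat.of R PUnit, LinearMap.id, 0, inferInstance, inferInstance,
    ⟨Function.injective_id, fun w => ⟨fun _ => ⟨w, rfl⟩, fun _ => rfl⟩, fun _ => ⟨0, rfl⟩⟩,
    h𝒴.freeMem _ inferInstance inferInstance⟩

theorem exists_algebra_quotient_of_ker_eq_sup {Q R : Type*} [CommRing Q] [CommRing R] [Algebra Q R]
    (hsurj : Function.Surjective (algebraMap Q R)) {I : Ideal Q} {f : Q}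
    (hker : RingHom.ker (algebraMap Q R) = I ⊔ Ideal.span {f}) :
    ∃ _ : Algebra (Q ⧸ I) R, IsScalarTower Q (Q ⧸ I) R ∧
      Function.Surjective (algebraMap (Q ⧸ I) R) ∧
      RingHom.ker (algebraMap (Q ⧸ I) R) = Ideal.span {Ideal.Quotient.mk I f} := by
  have hI : I ≤ RingHom.ker (algebraMap Q R) := hker ▸ le_sup_left
  let _ : Algebra (Q ⧸ I) R := (Ideal.Quotient.lift I (algebraMap Q R) hI).toAlgebra
  refine ⟨‹_›, .of_algebraMap_eq fun _ => rfl,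
    Ideal.Quotient.lift_surjective_of_surjective I hI hsurj, ?_⟩
  rw [RingHom.algebraMap_toAlgebra, Ideal.ker_quotient_lift, hker, Ideal.map_sup,
    Ideal.map_quotient_self, bot_sup_eq, Ideal.map_span, Set.image_singleton]

theorem isSMulRegular_quotient_mk_of_isSMulRegular {Q : Type*} [CommRing Q] {I : Ideal Q} {f : Q}
    (hf : IsSMulRegular (Q ⧸ I • (⊤ : Ideal Q)) f) :
    IsSMulRegular (Q ⧸ I) (Ideal.Quotient.mk I f) := by
  rw [smul_eq_mul, Ideal.mul_top] at hf
  exact hf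

theorem hasProjectiveDimensionLE_ker_of_fin_pi {Q S : Type u} [CommRing Q] [CommRing S]
    [Algebra Q S] {n c : ℕ} (hS : HasProjectiveDimensionLE (ModuleCat.of Q S) c) {W : Type u}
    [AddCommGroup W] [Module S W] [Module Q W] [IsScalarTower Q S W] {p : (Fin n → S) →ₗ[S] W}
    (hp : Function.Surjective p) (hW : HasProjectiveDimensionLE (ModuleCat.of Q W) (c + 1)) :
    HasProjectiveDimensionLE (ModuleCat.of Q (LinearMap.ker p)) c := by
  have hses : IsSES Q (A := ModuleCat.of Q (LinearMap.ker p)) (B := ModuleCat.of Q (Fin n → S))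
      (C := ModuleCat.of Q W) ((LinearMap.ker p).subtype.restrictScalars Q)
      (p.restrictScalars Q) := ⟨Subtype.val_injective, LinearMap.exact_subtype_ker_map p, hp⟩
  exact hses.shortExact.hasProjectiveDimensionLT_X₁ _ (hasProjectiveDimensionLT_fin_pi hS n) hW

theorem isFirstSyzygyIn_of_hasProjectiveDimensionLE {Q : Type u} [CommRing Q] [IsLocalRing Q]
    [IsNoetherianRing Q] [Algebra Q R] (hsurj : Function.Surjective (algebraMap Q R)) {rs : List Q}
    (hrs : RingTheory.Sequence.IsWeaklyRegular Q rs) (hmem : ∀ r ∈ rs, r ∈ maximalIdeal Q)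
    (hker : RingHom.ker (algebraMap Q R) = Ideal.ofList rs) {𝒴 : Set (ModuleCat.{u} R)}
    (h𝒴 : IsResolving R 𝒴) {W : Type u} [AddCommGroup W] [Module R W] [Module Q W]
    [IsScalarTower Q R W] (hW : ModuleCat.of R W ∈ 𝒴)
    (hpd : HasProjectiveDimensionLE (ModuleCat.of Q W) rs.length) :
    IsFirstSyzygyIn R 𝒴 (ModuleCat.of R W) := by
  have : Module.Finite R W := h𝒴.finite _ hW
  have : Module.Finite Q R := .of_surjective (Algebra.linearMap Q R) hsurj
  have : Module.Finite Q W := .trans R W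
  induction rs using List.reverseRecOn generalizing R W with
  | nil =>
    have : Module.Projective Q W := (IsProjective.iff_projective W).2
      (projective_iff_hasProjectiveDimensionLT_one.2 hpd)
    have : Module.Free Q W := Module.free_of_flat_of_isLocalRing
    have : Module.Free R W := free_of_surjective_algebraMap hsurj W
    exact isFirstSyzygyIn_of_free h𝒴 _
  | append_singleton rs f ih =>
    rw [RingTheory.Sequence.isWeaklyRegular_append_iff,
      RingTheory.Sequence.isWeaklyRegular_singleton_iff] at hrs
    rw [Ideal.ofList_append, Ideal.ofList_singleton] at hker
    rw [List.length_append, List.length_singleton] at hpd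
    have hmem' : ∀ r ∈ rs, r ∈ maximalIdeal Q := fun r hr => hmem r (List.mem_append_left _ hr)
    let S := Q ⧸ Ideal.ofList rs
    let x : S := Ideal.Quotient.mk _ f
    obtain ⟨_, _, hsurj', hker'⟩ := exists_algebra_quotient_of_ker_eq_sup hsurj hker
    let _ : Module S W := Module.compHom W (algebraMap S R)
    have : IsScalarTower S R W := .of_compHom S R W
    have : IsScalarTower Q S W := .to₁₂₄ Q S R W
    have : Module.Finite S W := .of_restrictScalars_finite Q S W
    obtain ⟨n, p, hp⟩ := Module.Finite.exists_fin' S W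
    have hses := isSES_ker_subtype (B := ModuleCat.of S (Fin n → S)) (C := ModuleCat.of S W) hp
    have hx : IsSMulRegular S x := isSMulRegular_quotient_mk_of_isSMulRegular hrs.2
    have hxpi : IsSMulRegular (Fin n → S) x := .pi fun _ => hx
    have hpdV : HasProjectiveDimensionLE (ModuleCat.of Q (LinearMap.ker p)) rs.length :=
      hasProjectiveDimensionLE_ker_of_fin_pi
        (hasProjectiveDimensionLE_quotient_ofList hrs.1 hmem') hp hpd
    exact .of_isSES_regularLift h𝒴 hsurj' hker' hses hxpi hW <|
      ih Ideal.Quotient.mk_surjective hrs.1 hmem' Ideal.mk_ker (h𝒴.regularLift hsurj' hker' hx)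
        (hses.mem_regularLift h𝒴 hsurj' hker' hxpi hW) hpdV inferInstance
        inferInstance (.trans S (LinearMap.ker p))

end ChangeOfRings

section ExtOrthogonality

open CategoryTheory.Abelian

variable {R : Type u} [CommRing R]

/-- The left Ext-orthogonal class of `K`: the finitely generated modules `U` such that
`Extⁿ(U, K) = 0` for all `n > 0`. -/
def leftOrthogonal (R : Type u) [CommRing R] (K : ModuleCat.{u} R) : Set (ModuleCat.{u} R) :=
  {U | Module.Finite R U ∧ ∀ n : ℕ, Subsingleton (Ext U K (n + 1))}

theorem subsingleton_ext_of_retract {X Y K : ModuleCat.{u} R} (h : Retract X Y) (n : ℕ)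
    [Subsingleton (Ext Y K n)] : Subsingleton (Ext X K n) := by
  refine subsingleton_of_forall_eq 0 fun x => ?_
  rw [← x.mk₀_id_comp, ← h.retract, ← Ext.mk₀_comp_mk₀, Ext.comp_assoc_of_second_deg_zero,
    Subsingleton.elim ((Ext.mk₀ h.r).comp x (zero_add n)) 0, Ext.comp_zero]

theorem subsingleton_ext_of_projective {P : ModuleCat.{u} R} [Module.Projective R P]
    (K : ModuleCat.{u} R) (n : ℕ) : Subsingleton (Ext P K (n + 1)) := by
  have : Projective P := (IsProjective.iff_projective P).1 inferInstance
  exact subsingleton_of_forall_eq 0 Ext.eq_zero_of_projective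

namespace IsSES

variable {A B C K : ModuleCat.{u} R} {i : A →ₗ[R] B} {p : B →ₗ[R] C}

theorem subsingleton_ext_left (h : IsSES R i p) (n : ℕ) [Subsingleton (Ext B K n)]
    [Subsingleton (Ext C K (n + 1))] : Subsingleton (Ext A K n) := by
  refine subsingleton_of_forall_eq 0 fun x => ?_
  obtain ⟨y, rfl⟩ := Ext.contravariant_sequence_exact₁ h.shortExact K x (add_comm 1 n)
    (Subsingleton.elim _ _)
  rw [Subsingleton.elim y 0, Ext.comp_zero]

theorem subsingleton_ext_middle (h : IsSES R i p) (n : ℕ) [Subsingleton (Ext A K n)]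
    [Subsingleton (Ext C K n)] : Subsingleton (Ext B K n) := by
  refine subsingleton_of_forall_eq 0 fun x => ?_
  obtain ⟨y, rfl⟩ := Ext.contravariant_sequence_exact₂ h.shortExact K x (Subsingleton.elim _ _)
  rw [Subsingleton.elim y 0, Ext.comp_zero]

theorem subsingleton_ext_right (h : IsSES R i p) (n : ℕ) [Subsingleton (Ext A K n)]
    [Subsingleton (Ext B K (n + 1))] : Subsingleton (Ext C K (n + 1)) := by
  refine subsingleton_of_forall_eq 0 fun x => ?_
  obtain ⟨y, rfl⟩ := Ext.contravariant_sequence_exact₃ h.shortExact K x (Subsingleton.elim _ _)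
    (add_comm 1 n)
  rw [Subsingleton.elim y 0, Ext.comp_zero]

theorem subsingleton_ext_one [Module.Projective R B] (h : IsSES R i p)
    (hext : ∀ g : A →ₗ[R] K, ∃ g' : B →ₗ[R] K, g' ∘ₗ i = g) : Subsingleton (Ext C K 1) := by
  have := subsingleton_ext_of_projective (P := B) K 0
  refine subsingleton_of_forall_eq 0 fun x => ?_
  obtain ⟨y, rfl⟩ := Ext.contravariant_sequence_exact₃ h.shortExact K x (Subsingleton.elim _ _)
    (add_comm 1 0)
  obtain ⟨g, rfl⟩ := (Ext.mk₀_bijective _ _).2 y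
  obtain ⟨g', hg'⟩ := hext g.hom
  have hg : g = ModuleCat.ofHom i ≫ ModuleCat.ofHom g' := ModuleCat.hom_ext hg'.symm
  rw [hg, ← Ext.mk₀_comp_mk₀]
  exact h.shortExact.extClass_comp_assoc _

theorem exists_extension (h : IsSES R i p) [Subsingleton (Ext C K 1)] (g : A →ₗ[R] K) :
    ∃ g' : B →ₗ[R] K, g' ∘ₗ i = g := by
  obtain ⟨y, hy⟩ := Ext.contravariant_sequence_exact₁ h.shortExact K (Ext.mk₀ (ModuleCat.ofHom g))
    (add_comm 1 0) (Subsingleton.elim _ _)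
  obtain ⟨g', rfl⟩ := (Ext.mk₀_bijective _ _).2 y
  rw [Ext.mk₀_comp_mk₀] at hy
  exact ⟨g'.hom, congr(ModuleCat.Hom.hom $((Ext.mk₀_bijective _ _).1 hy))⟩

end IsSES

theorem isResolving_leftOrthogonal [IsNoetherianRing R] (K : ModuleCat.{u} R) :
    IsResolving R (leftOrthogonal R K) where
  finite _ hU := hU.1
  isoClosed := fun ⟨_, hext⟩ e => ⟨.equiv e, fun n =>
    have := hext n
    subsingleton_ext_of_retract e.symm.toModuleIso.retract (n + 1)⟩
  freeMem _ hfin _ := ⟨hfin, subsingleton_ext_of_projective K⟩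
  summandClosed U V := fun ⟨_, hext⟩ =>
    ⟨.of_surjective (LinearMap.fst R U V) LinearMap.fst_surjective, fun n =>
      have := hext n
      have hretract : Retract U (ModuleCat.of R (U × V)) :=
        ⟨ModuleCat.ofHom (LinearMap.inl R U V), ModuleCat.ofHom (LinearMap.fst R U V), rfl⟩
      subsingleton_ext_of_retract hretract (n + 1)⟩
  extClosed _ _ _ _ _ h := fun ⟨_, hA⟩ ⟨_, hC⟩ => ⟨.of_exact h.2.1 h.2.2, fun n =>
    have := hA n
    have := hC n
    h.subsingleton_ext_middle (n + 1)⟩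
  kerClosed _ _ _ f _ h := fun ⟨_, hB⟩ ⟨_, hC⟩ => ⟨.of_injective f h.1, fun n =>
    have := hB n
    have := hC (n + 1)
    h.subsingleton_ext_left (n + 1)⟩

theorem IsResolving.fin_pi_mem {𝒳 : Set (ModuleCat.{u} R)} (h𝒳 : IsResolving R 𝒳) (n : ℕ) :
    ModuleCat.of R (Fin n → R) ∈ 𝒳 :=
  h𝒳.freeMem _ (inferInstanceAs (Module.Finite R (Fin n → R)))
    (inferInstanceAs (Module.Free R (Fin n → R)))

theorem IsResolving.exists_isSES_fin_pi {𝒳 : Set (ModuleCat.{u} R)} (h𝒳 : IsResolving R 𝒳)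
    {W : ModuleCat.{u} R} (hW : W ∈ 𝒳) :
    ∃ (n : ℕ) (A : ModuleCat.{u} R) (i : A →ₗ[R] ModuleCat.of R (Fin n → R))
      (p : ModuleCat.of R (Fin n → R) →ₗ[R] W), IsSES R i p ∧ A ∈ 𝒳 := by
  have := h𝒳.finite W hW
  obtain ⟨n, p, hp⟩ := Module.Finite.exists_fin' R W
  have hses := isSES_ker_subtype (B := ModuleCat.of R (Fin n → R)) hp
  exact ⟨n, _, _, p, hses, h𝒳.kerClosed _ _ _ _ _ hses (h𝒳.fin_pi_mem n) hW⟩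

theorem IsRightApprox.subset_leftOrthogonal_ker {𝒳 : Set (ModuleCat.{u} R)}
    (h𝒳 : IsResolving R 𝒳) {M X : ModuleCat.{u} R} {f : X →ₗ[R] M} (hf : IsRightApprox R 𝒳 f)
    (hmin : IsRightMinimal f) : 𝒳 ⊆ leftOrthogonal R (ModuleCat.of R (LinearMap.ker f)) := by
  refine fun W hW => ⟨h𝒳.finite W hW, fun n => ?_⟩
  induction n generalizing W with
  | zero =>
    obtain ⟨n, A, i, p, hses, -⟩ := h𝒳.exists_isSES_fin_pi hW
    exact hses.subsingleton_ext_one (hf.exists_extension_ker h𝒳 hmin hses hW)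
  | succ n ih =>
    obtain ⟨m, A, i, p, hses, hA⟩ := h𝒳.exists_isSES_fin_pi hW
    have := ih A hA
    have := subsingleton_ext_of_projective (P := ModuleCat.of R (Fin m → R))
      (ModuleCat.of R (LinearMap.ker f)) (n + 1)
    exact hses.subsingleton_ext_right (n + 1)

end ExtOrthogonality

section FlatBaseChange

open TensorProduct CategoryTheory.Abelian

variable {R : Type u} [CommRing R] (S : Type u) [CommRing S] [Algebra R S]

theorem IsSES.flatBaseChange [Module.Flat R S] {A B C : ModuleCat.{u} R} {i : A →ₗ[R] B}
    {p : B →ₗ[R] C} (h : IsSES R i p) :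
    IsSES S (A := ModuleCat.of S (S ⊗[R] A)) (B := ModuleCat.of S (S ⊗[R] B))
      (C := ModuleCat.of S (S ⊗[R] C)) (i.baseChange S) (p.baseChange S) :=
  ⟨Module.Flat.lTensor_preserves_injective_linearMap _ h.1, lTensor_exact S h.2.1 h.2.2,
    LinearMap.lTensor_surjective S h.2.2⟩

theorem exists_extension_baseChange [Module.Flat R S] {A B K : Type*} [AddCommGroup A] [Module R A]
    [Module.FinitePresentation R A] [AddCommGroup B] [Module R B] [AddCommGroup K] [Module R K]
    {i : A →ₗ[R] B} (hext : ∀ g : A →ₗ[R] K, ∃ g' : B →ₗ[R] K, g' ∘ₗ i = g)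
    (β : S ⊗[R] A →ₗ[S] S ⊗[R] K) : ∃ β' : S ⊗[R] B →ₗ[S] S ⊗[R] K, β' ∘ₗ i.baseChange S = β := by
  induction β using (Module.FinitePresentation.isBaseChange_map R A K S).inductionOn with
  | zero => exact ⟨0, LinearMap.zero_comp _⟩
  | tmul g =>
    obtain ⟨g', rfl⟩ := hext g
    exact ⟨g'.baseChange S, (LinearMap.baseChange_comp ..).symm⟩
  | smul s β hβ =>
    obtain ⟨β', rfl⟩ := hβ
    exact ⟨s • β', LinearMap.smul_comp ..⟩
  | add β₁ β₂ hβ₁ hβ₂ =>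
    obtain ⟨β₁', rfl⟩ := hβ₁
    obtain ⟨β₂', rfl⟩ := hβ₂
    exact ⟨β₁' + β₂', LinearMap.add_comp ..⟩

theorem baseChange_mem_leftOrthogonal [IsNoetherianRing R] [Module.Flat R S]
    {W K : ModuleCat.{u} R} (hW : W ∈ leftOrthogonal R K) :
    ModuleCat.of S (S ⊗[R] W) ∈ leftOrthogonal S (ModuleCat.of S (S ⊗[R] K)) := by
  have hres := isResolving_leftOrthogonal K
  have : Module.Finite R W := hW.1
  refine ⟨inferInstanceAs (Module.Finite S (S ⊗[R] W)), fun n => ?_⟩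
  induction n generalizing W with
  | zero =>
    obtain ⟨n, A, i, p, hses, hA⟩ := hres.exists_isSES_fin_pi hW
    have : Module.Finite R A := hA.1
    have : Module.FinitePresentation R A := Module.finitePresentation_of_finite R A
    have := hW.2 0
    have : Module.Projective S (ModuleCat.of S (S ⊗[R] (Fin n → R))) :=
      inferInstanceAs (Module.Projective S (S ⊗[R] (Fin n → R)))
    exact (hses.flatBaseChange S).subsingleton_ext_one
      (exists_extension_baseChange S fun g => hses.exists_extension g)
  | succ n ih =>
    obtain ⟨m, A, i, p, hses, hA⟩ := hres.exists_isSES_fin_pi hW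
    have := ih hA hA.1
    have : Module.Projective S (ModuleCat.of S (S ⊗[R] (Fin m → R))) :=
      inferInstanceAs (Module.Projective S (S ⊗[R] (Fin m → R)))
    have := subsingleton_ext_of_projective (P := ModuleCat.of S (S ⊗[R] (Fin m → R)))
      (ModuleCat.of S (S ⊗[R] K)) (n + 1)
    exact (hses.flatBaseChange S).subsingleton_ext_right (n + 1)

theorem exists_lift_of_forall_exists_lift_baseChange [Module.FaithfullyFlat R S] {W G K : Type u}
    [AddCommGroup W] [Module R W] [Module.FinitePresentation R W] [AddCommGroup G] [Module R G]
    [AddCommGroup K] [Module R K] {π : G →ₗ[R] K}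
    (hπ : ∀ γ : S ⊗[R] W →ₗ[S] S ⊗[R] K, ∃ γ' : S ⊗[R] W →ₗ[S] S ⊗[R] G,
      π.baseChange S ∘ₗ γ' = γ) (g : W →ₗ[R] K) :
    ∃ g' : W →ₗ[R] G, π ∘ₗ g' = g := by
  let eG := (Module.FinitePresentation.isBaseChange_map R W G S).equiv
  let eK := (Module.FinitePresentation.isBaseChange_map R W K S).equiv
  have hsquare (z : S ⊗[R] (W →ₗ[R] G)) :
      eK ((LinearMap.compRight R π).lTensor S z) = π.baseChange S ∘ₗ eG z := by
    induction z with
    | zero => simp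
    | tmul s h =>
      simp [eG, eK, IsBaseChange.equiv_tmul, LinearMap.baseChange_comp, LinearMap.comp_smul]
    | add z₁ z₂ h₁ h₂ => simp only [map_add, h₁, h₂, LinearMap.comp_add]
  suffices hsurj : Function.Surjective (LinearMap.compRight R π : (W →ₗ[R] G) →ₗ[R] _) from
    hsurj g
  rw [← Module.FaithfullyFlat.lTensor_surjective_iff_surjective R S]
  intro z
  obtain ⟨γ, hγ⟩ := hπ (eK z)
  refine ⟨eG.symm γ, eK.injective ?_⟩
  rw [hsquare, eG.apply_symm_apply, hγ]

theorem exists_lift_of_isFirstSyzygyIn_leftOrthogonal [Module.FaithfullyFlat R S]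
    {W K : ModuleCat.{u} R} [Module.FinitePresentation R W]
    (hW : IsFirstSyzygyIn S (leftOrthogonal S (ModuleCat.of S (S ⊗[R] K)))
      (ModuleCat.of S (S ⊗[R] W))) {G : Type u} [AddCommGroup G] [Module R G] {π : G →ₗ[R] K}
    (hπ : Function.Surjective π) (g : W →ₗ[R] K) : ∃ g' : W →ₗ[R] G, π ∘ₗ g' = g := by
  obtain ⟨F, C, j, q, -, _, hses, hC⟩ := hW
  have := hC.2 0
  refine exists_lift_of_forall_exists_lift_baseChange S (fun γ => ?_) g
  obtain ⟨δ, hδ⟩ := hses.exists_extension (K := ModuleCat.of S (S ⊗[R] K)) γ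
  obtain ⟨δ', hδ'⟩ := Module.projective_lifting_property (π.baseChange S) δ
    (LinearMap.lTensor_surjective S hπ)
  exact ⟨δ' ∘ₗ j, by rw [← LinearMap.comp_assoc, hδ', hδ]⟩

end FlatBaseChange

section MaximalCohenMacaulay

open RingTheory.Sequence

theorem ExtVanish.isZero_homology {R : Type u} [CommRing R] {n : ℕ} {X Y : ModuleCat.{u} R}
    (h : ExtVanish R n X Y) (P : ProjectiveResolution X) :
    Limits.IsZero ((P.complex.linearYonedaObj R Y).homology n) := by
  have : Subsingleton (ExtMod R n X Y) := h
  exact (ModuleCat.isZero_of_subsingleton (ExtMod R n X Y)).of_iso (P.isoExt n Y).symm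

theorem ExtVanish.subsingleton_ext {R : Type u} [CommRing R] {n : ℕ} {X Y : ModuleCat.{u} R}
    (h : ExtVanish R n X Y) : Subsingleton (Abelian.Ext X Y n) := by
  let P := projectiveResolution X
  have hexact := h.isZero_homology P
  rw [← HomologicalComplex.exactAt_iff_isZero_homology] at hexact
  refine subsingleton_of_forall_eq 0 fun α => ?_
  obtain ⟨f, hf, rfl⟩ := P.extMk_surjective α (n + 1) rfl
  cases n with
  | zero =>
    rw [HomologicalComplex.exactAt_iff' _ 0 0 1 (by simp) (by simp),
      ShortComplex.moduleCat_exact_iff] at hexact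
    obtain ⟨g, rfl⟩ := hexact f hf
    have hd : (P.complex.linearYonedaObj R Y).d 0 0 = 0 :=
      HomologicalComplex.shape _ _ _ (by simp)
    have hg : (P.complex.linearYonedaObj R Y).d 0 0 g = 0 := by rw [hd]; rfl
    have hext : ∀ (f : P.complex.X 0 ⟶ Y) (hf : P.complex.d 1 0 ≫ f = 0), f = 0 →
        P.extMk f 1 rfl hf = 0 := by
      rintro _ _ rfl
      exact P.extMk_zero _ _
    exact hext _ hf hg
  | succ k =>
    rw [HomologicalComplex.exactAt_iff' _ k (k + 1) (k + 1 + 1) (by simp) (by simp),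
      ShortComplex.moduleCat_exact_iff] at hexact
    obtain ⟨g, hg⟩ := hexact f hf
    exact (P.extMk_eq_zero_iff _ _ _ _ k rfl).2 ⟨g, hg⟩

theorem exists_isRegular_of_le_moduleDepth {R : Type u} [CommRing R] [IsNoetherianRing R]
    [IsLocalRing R] {W : ModuleCat.{u} R} [Module.Finite R W] [Nontrivial W] {d : ℕ}
    (hd : d ≤ moduleDepth R W) :
    ∃ rs : List R, rs.length = d ∧ (∀ r ∈ rs, r ∈ maximalIdeal R) ∧ IsRegular W rs := by
  have : Module.Finite R (ModuleCat.of R (ResidueField R)) :=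
    inferInstanceAs (Module.Finite R (R ⧸ maximalIdeal R))
  refine ModuleCat.exists_isRegular_of_exists_subsingleton_ext (maximalIdeal R) d W ?_
    (ModuleCat.of R (ResidueField R)) ?_ fun i hi => ExtVanish.subsingleton_ext ?_
  · exact (Submodule.top_ne_ideal_smul_of_le_jacobson_annihilator
      (maximalIdeal_le_jacobson _)).symm.lt_top
  · have hsupp := Module.support_eq_zeroLocus (R := R) (M := R ⧸ maximalIdeal R)
    rwa [Ideal.annihilator_quotient] at hsupp
  · by_contra hext
    have hle : moduleDepth R W ≤ i := sInf_le ⟨i, hext, rfl⟩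
    exact (Nat.cast_le.1 (hd.trans hle)).not_gt hi

theorem exists_natCast_eq_ringKrullDim (R : Type*) [CommRing R] [FiniteRingKrullDim R] :
    ∃ d : ℕ, (d : WithBot ℕ∞) = ringKrullDim R := by
  obtain ⟨a, ha⟩ := WithBot.ne_bot_iff_exists.1 (ringKrullDim_ne_bot (R := R))
  obtain ⟨d, rfl⟩ := ENat.ne_top_iff_exists.1 fun h : a = ⊤ =>
    ringKrullDim_ne_top (R := R) (by rw [← ha, h]; rfl)
  exact ⟨d, ha⟩

theorem IsMCM.exists_isRegular {R : Type u} [CommRing R] [IsNoetherianRing R] [IsLocalRing R]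
    {W : ModuleCat.{u} R} [Module.Finite R W] [Nontrivial W] (hW : IsMCM R W) :
    ∃ rs : List R, rs.length = ringKrullDim R ∧ (∀ r ∈ rs, r ∈ maximalIdeal R) ∧
      IsRegular W rs := by
  obtain ⟨d, hd⟩ := exists_natCast_eq_ringKrullDim R
  obtain ⟨rs, rfl, hmem, hrs⟩ := exists_isRegular_of_le_moduleDepth (R := R) (W := W) (d := d)
    (by exact_mod_cast hd.trans_le hW)
  exact ⟨rs, hd, hmem, hrs⟩

end MaximalCohenMacaulay

section AuslanderBuchsbaum

open RingTheory.Sequence TensorProduct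

theorem ringKrullDim_le_of_map_maximalIdeal_eq {R S : Type*} [CommRing R] [IsNoetherianRing R]
    [IsLocalRing R] [CommRing S] [IsNoetherianRing S] [IsLocalRing S] [Algebra R S]
    (hmap : (maximalIdeal R).map (algebraMap R S) = maximalIdeal S) :
    ringKrullDim S ≤ ringKrullDim R := by
  have : IsLocalHom (algebraMap R S) := ((local_hom_TFAE (algebraMap R S)).out 0 2).2 hmap.le
  have hle := Ideal.height_le_height_add_of_liesOver (maximalIdeal R) (maximalIdeal S)
  have : Nontrivial (S ⧸ (maximalIdeal R).map (algebraMap R S)) := by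
    rw [hmap]
    infer_instance
  have hbot : (maximalIdeal S).map (Ideal.Quotient.mk ((maximalIdeal R).map (algebraMap R S))) =
      ⊥ := (Ideal.map_eq_bot_iff_le_ker _).2 (by rw [Ideal.mk_ker, hmap])
  rw [hbot, Ideal.height_bot, add_zero] at hle
  rw [← maximalIdeal_height_eq_ringKrullDim, ← maximalIdeal_height_eq_ringKrullDim]
  exact_mod_cast hle

theorem ringKrullDim_add_length_eq_of_surjective {Q S : Type*} [CommRing Q] [IsNoetherianRing Q]
    [IsLocalRing Q] [CommRing S] [Algebra Q S] (hsurj : Function.Surjective (algebraMap Q S))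
    {fs : List Q} (hfs : IsRegular Q fs) (hker : RingHom.ker (algebraMap Q S) = Ideal.ofList fs) :
    ringKrullDim S + fs.length = ringKrullDim Q := by
  rw [← ringKrullDim_add_length_eq_ringKrullDim_of_isRegular fs hfs, ← hker,
    ringKrullDim_eq_of_ringEquiv (RingHom.quotientKerEquivOfSurjective hsurj)]

theorem mem_maximalIdeal_of_isRegular {Q : Type*} [CommRing Q] [IsLocalRing Q] {fs : List Q}
    (hfs : IsRegular Q fs) : ∀ f ∈ fs, f ∈ maximalIdeal Q := by
  have hne : Ideal.ofList fs ≠ ⊤ := fun htop => hfs.top_ne_smul (by rw [htop, Submodule.top_smul])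
  exact fun f hf => le_maximalIdeal hne (Ideal.subset_span hf)

theorem exists_isWeaklyRegular_lift_of_surjective {Q S V : Type*} [CommRing Q] [IsLocalRing Q]
    [CommRing S] [IsLocalRing S] [Algebra Q S] (hsurj : Function.Surjective (algebraMap Q S))
    [AddCommGroup V] [Module S V] [Module Q V] [IsScalarTower Q S V] {ss : List S}
    (hss : IsWeaklyRegular V ss) (hmem : ∀ s ∈ ss, s ∈ maximalIdeal S) :
    ∃ zs : List Q, zs.length = ss.length ∧ (∀ z ∈ zs, z ∈ maximalIdeal Q) ∧
      IsWeaklyRegular V zs := by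
  have : IsLocalHom (algebraMap Q S) := .of_surjective _ hsurj
  obtain ⟨zs, rfl⟩ := hsurj.list_map ss
  refine ⟨zs, (List.length_map _).symm, fun z hz => ?_,
    (isWeaklyRegular_map_algebraMap_iff S V zs).1 hss⟩
  rw [← maximalIdeal_comap (algebraMap Q S)]
  exact hmem _ (List.mem_map_of_mem hz)

/-- The half `pd V ≤ dim Q - depth V` of the Auslander–Buchsbaum formula. -/
theorem hasProjectiveDimensionLE_of_isWeaklyRegular {Q : Type u} [CommRing Q]
    [IsRegularLocalRing Q] {V : ModuleCat.{u} Q} [Module.Finite Q V] [Nontrivial V]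
    {zs : List Q} (hzs : IsWeaklyRegular V zs) (hmem : ∀ z ∈ zs, z ∈ maximalIdeal Q) {c : ℕ}
    (hdim : ringKrullDim Q ≤ c + zs.length) : HasProjectiveDimensionLE V c := by
  obtain ⟨n, hn⟩ := exists_natCast_eq_ringKrullDim Q
  have hquot := (projectiveDimension_le_iff _ _).2 (hasProjectiveDimensionLE_of_isRegularLocalRing
    hn.symm (V ⧸ Ideal.ofList zs • (⊤ : Submodule Q V)))
  rw [ModuleCat.projectiveDimension_quotient_eq_add_length_of_isWeaklyRegular V zs hzs hmem,
    hn] at hquot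
  exact (projectiveDimension_le_iff _ _).1
    (ENat.WithBot.add_le_add_natCast_right_iff.1 (hquot.trans hdim))

variable {R Q S : Type u} [CommRing R] [IsNoetherianRing R] [IsLocalRing R] [CommRing Q]
  [IsRegularLocalRing Q] [CommRing S] [IsLocalRing S] [Algebra R S] [Algebra Q S]

theorem IsMCM.hasProjectiveDimensionLE_baseChange [Module.Flat R S]
    (hmap : (maximalIdeal R).map (algebraMap R S) = maximalIdeal S)
    (hsurj : Function.Surjective (algebraMap Q S)) {fs : List Q} (hfs : IsRegular Q fs)
    (hker : RingHom.ker (algebraMap Q S) = Ideal.ofList fs) {W : ModuleCat.{u} R}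
    [Module.Finite R W] (hW : IsMCM R W) :
    HasProjectiveDimensionLE (ModuleCat.of Q (S ⊗[R] W)) fs.length := by
  have : IsNoetherianRing S := isNoetherianRing_of_surjective Q S _ hsurj
  have : Module.Finite Q S := .of_surjective (Algebra.linearMap Q S) hsurj
  have : Module.Finite Q (S ⊗[R] W) := .trans S _
  rcases subsingleton_or_nontrivial (S ⊗[R] W) with hV | hV
  · have := (ModuleCat.isZero_of_subsingleton (.of Q (S ⊗[R] W))).hasProjectiveDimensionLT_zero
    exact hasProjectiveDimensionLT_of_ge _ 0 _ (Nat.zero_le _)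
  · have : Nontrivial (ModuleCat.of Q (S ⊗[R] W)) := hV
    have : Nontrivial W := not_subsingleton_iff_nontrivial.1 fun _ =>
      not_subsingleton (S ⊗[R] W) inferInstance
    obtain ⟨rs, hlen, hmem, hrs⟩ := hW.exists_isRegular
    obtain ⟨zs, hzs_len, hzs_mem, hzs⟩ := exists_isWeaklyRegular_lift_of_surjective hsurj
      (hrs.1.of_flat_of_isBaseChange (TensorProduct.isBaseChange R W S))
      (List.forall_mem_map.2 fun r hr => hmap ▸ Ideal.mem_map_of_mem _ (hmem r hr))
    refine hasProjectiveDimensionLE_of_isWeaklyRegular hzs hzs_mem ?_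
    calc ringKrullDim Q = ringKrullDim S + fs.length :=
          (ringKrullDim_add_length_eq_of_surjective hsurj hfs hker).symm
      _ ≤ ringKrullDim R + fs.length := by
          gcongr
          exact ringKrullDim_le_of_map_maximalIdeal_eq hmap
      _ = fs.length + zs.length := by rw [hzs_len, List.length_map, hlen, add_comm]

theorem IsMCM.isFirstSyzygyIn_baseChange [Module.Flat R S]
    (hmap : (maximalIdeal R).map (algebraMap R S) = maximalIdeal S)
    (hsurj : Function.Surjective (algebraMap Q S)) {fs : List Q} (hfs : IsRegular Q fs)
    (hker : RingHom.ker (algebraMap Q S) = Ideal.ofList fs) {W : ModuleCat.{u} R}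
    [Module.Finite R W] (hW : IsMCM R W) {𝒴 : Set (ModuleCat.{u} S)} (h𝒴 : IsResolving S 𝒴)
    (hmem : ModuleCat.of S (S ⊗[R] W) ∈ 𝒴) :
    IsFirstSyzygyIn S 𝒴 (ModuleCat.of S (S ⊗[R] W)) := by
  have : IsNoetherianRing S := isNoetherianRing_of_surjective Q S _ hsurj
  exact isFirstSyzygyIn_of_hasProjectiveDimensionLE hsurj hfs.toIsWeaklyRegular
    (mem_maximalIdeal_of_isRegular hfs) hker h𝒴 hmem
    (hW.hasProjectiveDimensionLE_baseChange hmap hsurj hfs hker)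

end AuslanderBuchsbaum

section Coherence

theorem IsRightApprox.memCC {R : Type u} [CommRing R] {𝒳 : Set (ModuleCat.{u} R)}
    {X M P : ModuleCat.{u} R} {f : X →ₗ[R] M} (hf : IsRightApprox R 𝒳 f) (hP : P ∈ 𝒳)
    {π : P →ₗ[R] LinearMap.ker f}
    (hπ : ∀ W ∈ 𝒳, ∀ g : W →ₗ[R] LinearMap.ker f, ∃ g' : W →ₗ[R] P, π ∘ₗ g' = g) :
    MemCC R 𝒳 M := by
  refine ⟨X, P, (LinearMap.ker f).subtype ∘ₗ π, f, hf.1, hP, fun W hW => ⟨hf.2 W hW, fun g =>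
    ⟨fun hg => ?_, ?_⟩⟩⟩
  · obtain ⟨g', hg'⟩ := hπ W hW (g.codRestrict _ fun x => LinearMap.congr_fun hg x)
    exact ⟨g', congr((LinearMap.ker f).subtype ∘ₗ $hg')⟩
  · rintro ⟨g', rfl⟩
    exact LinearMap.ext fun x => (π (g' x)).2

attribute [instance] CompleteIntersectionWitness.commRing CompleteIntersectionWitness.localRing

namespace CompleteIntersectionWitness

variable {R : Type u} [CommRing R] [IsLocalRing R] (w : CompleteIntersectionWitness R)

/-- The projection of the regular local ring `Q` onto the completion `Q/(f₁, …, f_c)` of `R`. -/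
noncomputable def toCompletion : w.Q →+* AdicCompletion (maximalIdeal R) R :=
  w.equiv.symm.toRingHom.comp (Ideal.Quotient.mk _)

theorem toCompletion_surjective : Function.Surjective w.toCompletion :=
  w.equiv.symm.surjective.comp Ideal.Quotient.mk_surjective

theorem ker_toCompletion : RingHom.ker w.toCompletion = Ideal.ofList w.fs :=
  (RingHom.ker_equiv_comp _ w.equiv.symm).trans Ideal.mk_ker

theorem isRegularLocalRing : IsRegularLocalRing w.Q :=
  have := w.regular.1
  (IsRegularLocalRing.iff_finrank_cotangentSpace w.Q).2 w.regular.2.symm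

end CompleteIntersectionWitness

end Coherence

/-- Over a henselian local complete intersection, let `𝒳` be a resolving
subcategory consisting of maximal Cohen–Macaulay modules. If a finitely generated module
`M` admits a right `𝒳`-approximation (i.e. `Hom_R(-, M)|_𝒳` is finitely generated), then
`M ∈ 𝒞(𝒳)` (i.e. `Hom_R(-, M)|_𝒳` is finitely presented); in other words, `𝒳` is
coherent. -/
theorem stmt18 (R : Type u) [CommRing R] [IsNoetherianRing R] [IsLocalRing R]
    [HenselianLocalRing R] (hci : IsCompleteIntersection R)
    (𝒳 : Set (ModuleCat.{u} R)) (h𝒳 : IsResolving R 𝒳) (hMCM : ∀ M ∈ 𝒳, IsMCM R M)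
    (M : ModuleCat.{u} R) (hMfg : Module.Finite R M) (h : HasRightApprox R 𝒳 M) :
    MemCC R 𝒳 M := by
  obtain ⟨w⟩ := hci
  let S := AdicCompletion (maximalIdeal R) R
  let _ : Algebra w.Q S := w.toCompletion.toAlgebra
  have := w.isRegularLocalRing
  have : IsNoetherianRing S := isNoetherianRing_of_surjective w.Q S _ w.toCompletion_surjective
  have : Module.Flat R S := AdicCompletion.flat_of_isNoetherian _
  have : Module.FaithfullyFlat R S := .of_flat_of_isLocalHom
  obtain ⟨X, f, hf, hmin⟩ := h.exists_isRightMinimal h𝒳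
  have := h𝒳.finite X hf.1
  obtain ⟨m, π, hπ⟩ := Module.Finite.exists_fin' R (LinearMap.ker f)
  refine hf.memCC (h𝒳.fin_pi_mem m) (π := π) fun W hW => ?_
  have := h𝒳.finite W hW
  have := Module.finitePresentation_of_finite R W
  have horth := baseChange_mem_leftOrthogonal S (hf.subset_leftOrthogonal_ker h𝒳 hmin hW)
  have hsyz := (hMCM W hW).isFirstSyzygyIn_baseChange AdicCompletion.maximalIdeal_eq_map.symm
    w.toCompletion_surjective w.regSeq w.ker_toCompletion (isResolving_leftOrthogonal _) horth
  exact exists_lift_of_isFirstSyzygyIn_leftOrthogonal S hsyz hπ
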